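/- Assume the Riemann Hypothesis. There exists an absolute constant C > 0 such that for all real r, x, c₁ with r > 1, 0 < c₁, x^{c₁} ≥ 2657, and c₁ ≤ 1/2 − ln r/(2·ln x), the following holds: setting m = ⌈(1 − 2c₁)·ln x / ln r⌉, there exists ã ∈ [1/(4(1−c₁)²), 1/(4c₁²)] with |N^{MAX}_{r,c₁}(x) − ã·(4x/ln²x)·((1 − 2c₁)·(1 − 1/r)·ln x − 1 + (ln r + 1)/r)| ≤ C·(m+1)·c₁^{−1}·x^{1 − c₁/2}, where N^{MAX}_{r,c₁}(x) = #{(p,q) : p, q prime, x^{c₁} < p ≤ x^{1−c₁}, x^{c₁} < q ≤ x^{1−c₁}, and x/r < p·q ≤ x}. -/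

import Mathlib

/-- Prime-pair count of the maximal `[c₁, 1−c₁]`-balanced notion with tolerance `r`:
ordered pairs of primes `(p,q)` with `x^{c₁} < p, q ≤ x^{1−c₁}` and `x/r < p·q ≤ x`. -/
noncomputable def NMAX (r c₁ x : ℝ) : ℕ :=
  Nat.card {pq : ℕ × ℕ // pq.1.Prime ∧ pq.2.Prime ∧
    x ^ c₁ < (pq.1 : ℝ) ∧ (pq.1 : ℝ) ≤ x ^ (1 - c₁) ∧
    x ^ c₁ < (pq.2 : ℝ) ∧ (pq.2 : ℝ) ≤ x ^ (1 - c₁) ∧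
    x / r < (pq.1 : ℝ) * (pq.2 : ℝ) ∧ (pq.1 : ℝ) * (pq.2 : ℝ) ≤ x}

/-!
If `ζ` has no zeros in `Re s > Θ`, the Borel–Carathéodory theorem applied to `(s - 1) * ζ s` bounds
its logarithmic derivative there by a small power of `|Im s|`. Moving the contour in the Mellin
inversion formula for `∫₀ˣ ψ` to a line just right of `Re s = Θ` and taking differences in `x` then
gives `θ x = x + O(x ^ α)` for every `α > max Θ (1 / 2)`.

Write `y = x ^ c₁` and `z = x ^ (1 - c₁)`, so that `x = y * z`. Replacing `θ` by the identity first
in the sum over `q`, then in the sum over `p`, shows that the sum of `log p * log q` over the pairs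
is the area of the band `x / r < u * v ≤ x` in the square `(y, z]²`, up to an error consisting of a
harmless `O(x ^ α * log x)` and a term of order `(z - y) * y ^ α`.

Since `log y < log p` and `log p * log q ≤ (log x / 2) ^ 2 ≤ log z ^ 2`, the unweighted count lies
between the area divided by `log z ^ 2` and the area divided by `log y ^ 2`, up to the same error.
Both inequalities for the weight have room to spare, in the lower bound everywhere and in the upper
bound on the outer half of the band, and this room absorbs the term of order `(z - y) * y ^ α`
unless `r` is so close to `1` that the factor `m + 1` makes the term admissible. The coefficient `ã`
then interpolates between the two extremes.
-/

open Complex MeasureTheory Set Filter Topology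

/-! ### Growth of the zeta function to the right of the imaginary axis -/

section ZetaGrowth

/-- The fractional part on `(1, ∞)`, extended by zero, so that `∫₁^∞ {t} t ^ (-s - 1) dt` is its
Mellin transform at `-s`. -/
noncomputable def fractTail : ℝ → ℂ :=
  (Ioi 1).indicator fun t ↦ ((Int.fract t : ℝ) : ℂ)

lemma fractTail_of_le_one {t : ℝ} (ht : t ≤ 1) : fractTail t = 0 :=
  indicator_of_notMem (notMem_Ioi.2 ht) _

lemma fractTail_of_one_lt {t : ℝ} (ht : 1 < t) : fractTail t = (Int.fract t : ℝ) :=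
  indicator_of_mem (mem_Ioi.2 ht) _

lemma norm_fractTail_le_one (t : ℝ) : ‖fractTail t‖ ≤ 1 := by
  rcases le_or_gt t 1 with ht | ht
  · simp [fractTail_of_le_one ht]
  · rw [fractTail_of_one_lt ht, norm_real, Real.norm_of_nonneg (Int.fract_nonneg t)]
    exact (Int.fract_lt_one t).le

lemma locallyIntegrableOn_fractTail : LocallyIntegrableOn fractTail (Ioi 0) := by
  have hmeas : Measurable fractTail :=
    (measurable_ofReal.comp measurable_fract).indicator measurableSet_Ioi
  have hone : LocallyIntegrable fun _ : ℝ ↦ (1 : ℝ) := locallyIntegrable_const 1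
  refine (hone.mono hmeas.aestronglyMeasurable (.of_forall fun t ↦ ?_)).locallyIntegrableOn _
  simpa using norm_fractTail_le_one t

lemma fractTail_isBigO_atTop : fractTail =O[atTop] fun t : ℝ ↦ t ^ (-0 : ℝ) :=
  .of_bound 1 (.of_forall fun t ↦ by simpa using norm_fractTail_le_one t)

lemma fractTail_isBigO_nhdsGT_zero (b : ℝ) : fractTail =O[𝓝[>] 0] fun t : ℝ ↦ t ^ (-b) := by
  refine .of_bound 1 ?_
  filter_upwards [mem_nhdsWithin_of_mem_nhds (Iio_mem_nhds one_pos)] with t ht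
  simp [fractTail_of_le_one (mem_Iio.1 ht).le]

variable {s : ℂ}

lemma mellinConvergent_fractTail_neg (hs : 0 < s.re) : MellinConvergent fractTail (-s) :=
  mellinConvergent_of_isBigO_rpow locallyIntegrableOn_fractTail fractTail_isBigO_atTop
    (by simpa using hs) (fractTail_isBigO_nhdsGT_zero ((-s).re - 1)) (by simp)

lemma differentiableAt_mellin_fractTail_neg (hs : 0 < s.re) :
    DifferentiableAt ℂ (fun s ↦ mellin fractTail (-s)) s :=
  (mellin_differentiableAt_of_isBigO_rpow locallyIntegrableOn_fractTail fractTail_isBigO_atTop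
    (by simpa using hs) (fractTail_isBigO_nhdsGT_zero ((-s).re - 1)) (by simp)).comp s
    differentiable_neg.differentiableAt

lemma cpow_smul_fractTail_eqOn (s : ℂ) :
    EqOn (fun t : ℝ ↦ (t : ℂ) ^ (-s - 1) • fractTail t)
      (fun t ↦ (Int.fract t : ℝ) * (t : ℂ) ^ (-(s + 1))) (Ioi 1) := fun t ht ↦ by
  simp only [fractTail_of_one_lt ht, smul_eq_mul]
  ring_nf

lemma mellin_fractTail_neg (s : ℂ) :
    mellin fractTail (-s) = ∫ t in Ioi (1 : ℝ), (Int.fract t : ℝ) * (t : ℂ) ^ (-(s + 1)) := by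
  have hsub : Ioi (1 : ℝ) ⊆ Ioi 0 := Ioi_subset_Ioi zero_le_one
  rw [mellin, setIntegral_eq_of_subset_of_forall_sdiff_eq_zero measurableSet_Ioi hsub fun t ht ↦ by
    simp [fractTail_of_le_one (not_lt.1 ht.2)]]
  exact setIntegral_congr_fun measurableSet_Ioi (cpow_smul_fractTail_eqOn s)

lemma norm_mellin_fractTail_neg_le (hs : 0 < s.re) : ‖mellin fractTail (-s)‖ ≤ 1 / s.re := by
  have hrpow : IntegrableOn (fun t : ℝ ↦ t ^ (-(s.re + 1))) (Ioi 1) :=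
    integrableOn_Ioi_rpow_of_lt (by linarith) one_pos
  rw [mellin_fractTail_neg]
  calc
    _ ≤ ∫ t in Ioi (1 : ℝ), t ^ (-(s.re + 1)) := by
      refine norm_integral_le_of_norm_le hrpow ((ae_restrict_iff' measurableSet_Ioi).2 ?_)
      refine .of_forall fun t ht ↦ ?_
      have ht0 : 0 < t := one_pos.trans ht
      rw [norm_mul, norm_cpow_eq_rpow_re_of_pos ht0, norm_real,
        Real.norm_of_nonneg (Int.fract_nonneg t)]
      exact mul_le_of_le_one_left (by positivity) (Int.fract_lt_one t).le
    _ = 1 / s.re := by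
      rw [integral_Ioi_rpow_of_lt (by linarith) one_pos]
      simp

lemma integral_floor_mul_cpow (hs : 1 < s.re) :
    ∫ t in Ioi (1 : ℝ), (⌊t⌋₊ : ℂ) * (t : ℂ) ^ (-(s + 1)) =
      (s - 1)⁻¹ - mellin fractTail (-s) := by
  have hre : (-s).re < -1 := by simpa using hs
  have hfract : IntegrableOn (fun t : ℝ ↦ (Int.fract t : ℝ) * (t : ℂ) ^ (-(s + 1))) (Ioi 1) :=
    ((mellinConvergent_fractTail_neg (by linarith)).mono_set
      (Ioi_subset_Ioi zero_le_one)).congr_fun (cpow_smul_fractTail_eqOn s) measurableSet_Ioi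
  have hcpow : ∫ t in Ioi (1 : ℝ), (t : ℂ) ^ (-s) = (s - 1)⁻¹ := by
    rw [integral_Ioi_cpow_of_lt hre one_pos, ofReal_one, one_cpow, neg_div, ← div_neg, one_div,
      neg_add, neg_neg, sub_eq_add_neg]
  rw [mellin_fractTail_neg, ← hcpow,
    ← integral_sub (integrableOn_Ioi_cpow_of_lt hre one_pos) hfract]
  refine setIntegral_congr_fun measurableSet_Ioi fun t ht ↦ ?_
  have ht0 : (0 : ℝ) < t := one_pos.trans ht
  have hfloor : (⌊t⌋₊ : ℂ) = t - (Int.fract t : ℝ) := by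
    rw [← ofReal_natCast, natCast_floor_eq_intCast_floor ht0.le, ← Int.self_sub_fract, ofReal_sub]
  have hpow : (t : ℂ) ^ (-s) = t * (t : ℂ) ^ (-(s + 1)) := by
    rw [show -s = 1 + -(s + 1) by ring, cpow_add _ _ (ofReal_ne_zero.2 ht0.ne'), cpow_one]
  simp only [hfloor, hpow, sub_mul]

lemma riemannZeta₁_eq_of_one_lt_re (hs : 1 < s.re) :
    riemannZeta₁ s = s - s * (s - 1) * mellin fractTail (-s) := by
  have hpartial : (fun n : ℕ ↦ ∑ k ∈ Finset.Icc 1 n, ‖(1 : ℕ → ℂ) k‖) =O[atTop]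
      fun n ↦ (n : ℝ) ^ (1 : ℝ) := .of_bound 1 (.of_forall fun n ↦ by simp)
  have hzeta := LSeries_eq_mul_integral' 1 zero_le_one hs hpartial
  have hs1 : s ≠ 1 := by rintro rfl; simp at hs
  simp only [LSeries_one_eq_riemannZeta hs, riemannZeta_eq_inv_sub_mul hs1, Pi.one_apply,
    Finset.sum_const, Nat.card_Icc, add_tsub_cancel_right, nsmul_eq_mul, mul_one,
    integral_floor_mul_cpow hs] at hzeta
  have := sub_ne_zero.2 hs1
  field_simp at hzeta
  linear_combination hzeta

lemma riemannZeta₁_eq (hs : 0 < s.re) :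
    riemannZeta₁ s = s - s * (s - 1) * mellin fractTail (-s) := by
  have hopen : IsOpen {z : ℂ | 0 < z.re} := isOpen_lt continuous_const continuous_re
  have hdiff : DifferentiableOn ℂ (fun z ↦ z - z * (z - 1) * mellin fractTail (-z))
      {z : ℂ | 0 < z.re} := fun z hz ↦ by
    have := differentiableAt_mellin_fractTail_neg hz
    exact DifferentiableAt.differentiableWithinAt (by fun_prop)
  refine (differentiable_riemannZeta₁.differentiableOn.analyticOnNhd hopen)
    |>.eqOn_of_preconnected_of_eventuallyEq (hdiff.analyticOnNhd hopen)
      (convex_halfSpace_re_gt 0).isPreconnected (z₀ := 2) (by simp) ?_ hs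
  filter_upwards [(isOpen_lt continuous_const continuous_re).mem_nhds
    (show (2 : ℂ) ∈ {z : ℂ | 1 < z.re} by simp)] with z hz using riemannZeta₁_eq_of_one_lt_re hz

lemma norm_riemannZeta₁_le (hs : 0 < s.re) :
    ‖riemannZeta₁ s‖ ≤ (1 + 1 / s.re) * (1 + ‖s‖) ^ 2 := by
  have hsub : ‖s - 1‖ ≤ ‖s‖ + 1 := by simpa using norm_sub_le s 1
  have hinv : 0 < 1 / s.re := by positivity
  calc
    ‖riemannZeta₁ s‖ ≤ ‖s‖ + ‖s‖ * ‖s - 1‖ * ‖mellin fractTail (-s)‖ := by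
      rw [riemannZeta₁_eq hs, ← norm_mul, ← norm_mul]
      exact norm_sub_le _ _
    _ ≤ ‖s‖ + ‖s‖ * (‖s‖ + 1) * (1 / s.re) := by
      gcongr
      exact norm_mellin_fractTail_neg_le hs
    _ ≤ (1 + 1 / s.re) * (1 + ‖s‖) ^ 2 := by nlinarith [norm_nonneg s]

lemma one_third_le_norm_riemannZeta (hs : s.re = 2) : 1 / 3 ≤ ‖riemannZeta s‖ := by
  have hs1 : 1 < s.re := by linarith
  have hsummable : Summable fun n : ℕ ↦ 1 / ((n : ℂ) + 1) ^ s := by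
    simpa using (summable_nat_add_iff 1).2 (summable_one_div_nat_cpow.2 hs1)
  have hzeta : riemannZeta s = 1 + ∑' n : ℕ, 1 / (((n + 1 : ℕ) : ℂ) + 1) ^ s := by
    rw [zeta_eq_tsum_one_div_nat_add_one_cpow hs1, hsummable.tsum_eq_zero_add]
    simp
  have htail : HasSum (fun n : ℕ ↦ 1 / ((n : ℝ) + 2) ^ 2) (Real.pi ^ 2 / 6 - 1) := by
    simpa [Finset.sum_range_succ] using (hasSum_nat_add_iff' 2).2 hasSum_zeta_two
  have hterm (n : ℕ) : ‖1 / (((n + 1 : ℕ) : ℂ) + 1) ^ s‖ ≤ 1 / ((n : ℝ) + 2) ^ 2 := by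
    have hcast : ((n + 1 : ℕ) : ℂ) + 1 = ((n + 2 : ℝ) : ℂ) := by push_cast; ring
    rw [norm_div, norm_one, hcast, norm_cpow_eq_rpow_re_of_pos (by positivity), hs, Real.rpow_two]
  have htail_le : ‖riemannZeta s - 1‖ ≤ Real.pi ^ 2 / 6 - 1 := by
    rw [hzeta, add_sub_cancel_left]
    exact tsum_of_norm_bounded htail hterm
  have htriangle := norm_sub_norm_le 1 (1 - riemannZeta s)
  rw [sub_sub_cancel, norm_one, norm_sub_rev] at htriangle
  nlinarith [Real.pi_lt_d2, Real.pi_pos]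

lemma one_third_le_norm_riemannZeta₁ (hs : s.re = 2) : 1 / 3 ≤ ‖riemannZeta₁ s‖ := by
  have hs1 : s - 1 ≠ 0 := fun h ↦ by
    have := congrArg re h
    norm_num [hs] at this
  have hone : 1 ≤ ‖s - 1‖ := by
    simpa [hs, show (2 : ℝ) - 1 = 1 by norm_num] using abs_re_le_norm (s - 1)
  calc
    1 / 3 ≤ ‖riemannZeta s‖ := one_third_le_norm_riemannZeta hs
    _ ≤ ‖s - 1‖ * ‖riemannZeta s‖ := le_mul_of_one_le_left (norm_nonneg _) hone
    _ = ‖riemannZeta₁ s‖ := by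
      rw [riemannZeta_eq_inv_sub_mul (sub_ne_zero.1 hs1), ← norm_mul, mul_inv_cancel_left₀ hs1]

end ZetaGrowth

/-! ### Logarithmic derivatives of nonvanishing functions -/

section LogDeriv

variable {f : ℂ → ℂ} {c s : ℂ} {r R M : ℝ}

lemma exists_eq_mul_exp_on_ball (hR : 0 < R) (hf : DifferentiableOn ℂ f (Metric.ball c R))
    (hf0 : ∀ z ∈ Metric.ball c R, f z ≠ 0) :
    ∃ P : ℂ → ℂ, P c = 0 ∧ ∀ z ∈ Metric.ball c R,
      HasDerivAt P (logDeriv f z) z ∧ f z = f c * exp (P z) := by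
  have hlog : DifferentiableOn ℂ (logDeriv f) (Metric.ball c R) :=
    (hf.deriv Metric.isOpen_ball).div hf hf0
  obtain ⟨P, hPc, hP⟩ := hlog.isExactOn_ball.with_val_at c 0
  refine ⟨P, hPc, fun z hz ↦ ⟨hP z hz, ?_⟩⟩
  have hquot : ∀ w ∈ Metric.ball c R,
      HasDerivWithinAt (fun z ↦ f z * exp (-P z)) 0 (Metric.ball c R) w := fun w hw ↦ by
    have hfw := (hf.differentiableAt (Metric.isOpen_ball.mem_nhds hw)).hasDerivAt
    refine ((hfw.mul (hP w hw).neg.cexp).congr_deriv ?_).hasDerivWithinAt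
    rw [logDeriv_apply]
    field_simp [hf0 w hw]
    ring
  have hconst := (convex_ball c R).norm_image_sub_le_of_norm_hasDerivWithin_le (C := 0) hquot
    (by simp) (Metric.mem_ball_self hR) hz
  rw [zero_mul, norm_le_zero_iff, sub_eq_zero, hPc, neg_zero, exp_zero, mul_one] at hconst
  rw [← hconst, mul_assoc, ← exp_add, neg_add_cancel, exp_zero, mul_one]

-- Borel–Carathéodory bounds the logarithm of `f / f c` on the disc of radius `(R + r) / 2`, and
-- Cauchy's estimate on discs of radius `(R - r) / 2` then bounds its derivative.
lemma norm_logDeriv_le_of_norm_le_exp_mul (hM : 0 < M)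
    (hf : DifferentiableOn ℂ f (Metric.ball c R)) (hf0 : ∀ z ∈ Metric.ball c R, f z ≠ 0)
    (hfM : ∀ z ∈ Metric.ball c R, ‖f z‖ ≤ Real.exp M * ‖f c‖)
    (hs : ‖s - c‖ ≤ r) (hr : r < R) :
    ‖logDeriv f s‖ ≤ 8 * R * M / (R - r) ^ 2 := by
  have hR : 0 < R := (norm_nonneg _).trans_lt (hs.trans_lt hr)
  have hd : 0 < R - r := sub_pos.2 hr
  obtain ⟨P, hPc, hP⟩ := exists_eq_mul_exp_on_ball hR hf hf0
  have hPre : ∀ z ∈ Metric.ball c R, (P z).re ≤ M := fun z hz ↦ by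
    have hfc : 0 < ‖f c‖ := norm_pos_iff.2 (hf0 c (Metric.mem_ball_self hR))
    have hle := hfM z hz
    rw [(hP z hz).2, norm_mul, norm_exp, mul_comm, mul_le_mul_iff_left₀ hfc] at hle
    exact Real.exp_le_exp.1 hle
  have hmem {w : ℂ} : w ∈ Metric.ball 0 R → c + w ∈ Metric.ball c R := by simp
  have hPnorm : ∀ z : ℂ, ‖z - c‖ ≤ (R + r) / 2 → ‖P z‖ ≤ 4 * R * M / (R - r) := fun z hz ↦ by
    have hzR : ‖z - c‖ < R := by linarith
    have hBC := borelCaratheodory_zero (f := fun w ↦ P (c + w)) (M := M) (R := R) (z := z - c) hM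
      (fun w hw ↦ ((hP _ (hmem hw)).1.differentiableAt.comp w
        (by fun_prop)).differentiableWithinAt)
      (fun w hw ↦ hPre _ (hmem hw)) hR (by simpa using hzR) (by simpa using hPc)
    rw [add_sub_cancel] at hBC
    calc
      ‖P z‖ ≤ 2 * M * ‖z - c‖ / (R - ‖z - c‖) := hBC
      _ ≤ 2 * M * R / ((R - r) / 2) := by gcongr; linarith
      _ = 4 * R * M / (R - r) := by field_simp; norm_num
  have hball : ∀ z : ℂ, ‖z - s‖ ≤ (R - r) / 2 → ‖z - c‖ ≤ (R + r) / 2 := fun z hz ↦ by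
    linarith [norm_sub_le_norm_sub_add_norm_sub z s c]
  have hcauchy := norm_deriv_le_of_forall_mem_sphere_norm_le (half_pos hd)
    (DifferentiableOn.diffContOnCl fun z hz ↦ ?_)
    fun z hz ↦ hPnorm z (hball z (mem_sphere_iff_norm.1 hz).le)
  · rw [(hP s (mem_ball_iff_norm.2 (hs.trans_lt hr))).1.deriv] at hcauchy
    exact hcauchy.trans_eq (by field_simp; norm_num)
  · rw [closure_ball _ (half_pos hd).ne', mem_closedBall_iff_norm] at hz
    exact (hP z (mem_ball_iff_norm.2 (by linarith [hball z hz]))).1.differentiableAt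
      |>.differentiableWithinAt

/-- The Riemann hypothesis weakened to the zero-free half-plane `Re s > Θ`; the usual hypothesis
gives `Θ = 1 / 2`. -/
def QuasiRiemannHypothesis (Θ : ℝ) : Prop :=
  ∀ s : ℂ, Θ < s.re → riemannZeta s ≠ 0

lemma quasiRiemannHypothesis_of_riemannHypothesis (hRH : RiemannHypothesis) :
    QuasiRiemannHypothesis (1 / 2) := fun s hs hzero ↦ by
  have hs1 : s ≠ 1 := by
    rintro rfl
    exact riemannZeta_one_ne_zero hzero
  have htrivial : ¬∃ n : ℕ, s = -2 * (n + 1) := by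
    rintro ⟨n, rfl⟩
    have : (0 : ℝ) ≤ n := n.cast_nonneg
    norm_num at hs
    linarith
  exact hs.ne' (hRH s hzero htrivial hs1)

variable {Θ σ η : ℝ}

lemma QuasiRiemannHypothesis.mono {Θ' : ℝ} (hζ : QuasiRiemannHypothesis Θ) (h : Θ ≤ Θ') :
    QuasiRiemannHypothesis Θ' := fun s hs ↦ hζ s (h.trans_lt hs)

lemma QuasiRiemannHypothesis.riemannZeta₁_ne_zero (hζ : QuasiRiemannHypothesis Θ)
    (hs : Θ < s.re) : riemannZeta₁ s ≠ 0 := fun hzero ↦ by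
  rcases eq_or_ne s 1 with rfl | hs1
  · simp at hzero
  · exact hζ s hs (by rw [riemannZeta_eq_inv_sub_mul hs1, hzero, mul_zero])

lemma lt_re_of_mem_ball_two_add_mul_I {ρ t : ℝ} {z : ℂ}
    (hz : z ∈ Metric.ball (2 + t * I) (2 - ρ)) : ρ < z.re := by
  have hre := (abs_le.1 (abs_re_le_norm (z - (2 + t * I)))).1
  rw [show (z - (2 + t * I)).re = z.re - 2 by simp] at hre
  linarith [mem_ball_iff_norm.1 hz]

lemma norm_riemannZeta₁_le_of_mem_ball {ρ t : ℝ} {z : ℂ} (hρ : 0 < ρ)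
    (hz : z ∈ Metric.ball (2 + t * I) (2 - ρ)) :
    ‖riemannZeta₁ z‖ ≤ 75 * (1 + 1 / ρ) * (1 + |t|) ^ 2 * ‖riemannZeta₁ (2 + t * I)‖ := by
  have hre : ρ < z.re := lt_re_of_mem_ball_two_add_mul_I hz
  have hnorm : ‖z‖ ≤ 4 + |t| := by
    have hcenter : ‖(2 + t * I : ℂ)‖ ≤ 2 + |t| := by simpa using norm_add_le (2 : ℂ) (t * I)
    linarith [norm_sub_norm_le z (2 + t * I), mem_ball_iff_norm.1 hz]
  have hcenter : 1 ≤ 3 * ‖riemannZeta₁ (2 + t * I)‖ := by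
    linarith [one_third_le_norm_riemannZeta₁ (s := 2 + t * I) (by simp)]
  calc
    ‖riemannZeta₁ z‖ ≤ (1 + 1 / z.re) * (1 + ‖z‖) ^ 2 := norm_riemannZeta₁_le (hρ.trans hre)
    _ ≤ (1 + 1 / ρ) * (5 * (1 + |t|)) ^ 2 := by
      gcongr
      linarith [abs_nonneg t]
    _ ≤ (1 + 1 / ρ) * (5 * (1 + |t|)) ^ 2 * (3 * ‖riemannZeta₁ (2 + t * I)‖) :=
      le_mul_of_one_le_right (by positivity) hcenter
    _ = _ := by ring

lemma mul_one_add_abs_sq_le_exp {A η : ℝ} (hA : 0 < A) (hη : 0 < η) (t : ℝ) :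
    A * (1 + |t|) ^ 2 ≤ Real.exp (2 / η * A ^ (η / 2) * (1 + |t|) ^ η) := by
  rw [← Real.log_le_iff_le_exp (by positivity)]
  calc
    Real.log (A * (1 + |t|) ^ 2) ≤ (A * (1 + |t|) ^ 2) ^ (η / 2) / (η / 2) :=
      Real.log_le_rpow_div (by positivity) (half_pos hη)
    _ = 2 / η * A ^ (η / 2) * (1 + |t|) ^ η := by
      rw [Real.mul_rpow (by positivity) (by positivity), ← Real.rpow_two,
        ← Real.rpow_mul (by positivity), mul_div_cancel₀ _ two_ne_zero]
      field_simp

lemma QuasiRiemannHypothesis.exists_norm_logDeriv_riemannZeta₁_le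
    (hζ : QuasiRiemannHypothesis Θ) (hΘσ : Θ < σ) (hσ : 0 < σ) (hη : 0 < η) :
    ∃ C : ℝ, 0 < C ∧ ∀ s : ℂ, σ ≤ s.re → s.re ≤ 2 →
      ‖logDeriv riemannZeta₁ s‖ ≤ C * (1 + |s.im|) ^ η := by
  obtain ⟨ρ, hρ, hρσ⟩ := exists_between (max_lt hΘσ hσ)
  obtain ⟨hΘρ, hρ0⟩ := max_lt_iff.1 hρ
  set A : ℝ := 75 * (1 + 1 / ρ)
  refine ⟨8 * 2 * (2 / η * A ^ (η / 2)) / (σ - ρ) ^ 2, ?_, fun s hσs hs2 ↦ ?_⟩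
  · have := sub_pos.2 hρσ
    positivity
  have hcenter : ‖s - (2 + s.im * I)‖ ≤ 2 - σ := by
    have hreal : s - (2 + s.im * I) = ((s.re - 2 : ℝ) : ℂ) := by
      apply Complex.ext <;> simp
    rw [hreal, norm_real, Real.norm_eq_abs, abs_le]
    constructor <;> linarith
  have hbound := norm_logDeriv_le_of_norm_le_exp_mul
    (M := 2 / η * A ^ (η / 2) * (1 + |s.im|) ^ η) (by positivity)
    differentiable_riemannZeta₁.differentiableOn
    (fun z hz ↦ hζ.riemannZeta₁_ne_zero (hΘρ.trans (lt_re_of_mem_ball_two_add_mul_I hz)))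
    (fun z hz ↦ (norm_riemannZeta₁_le_of_mem_ball hρ0 hz).trans (mul_le_mul_of_nonneg_right
      (mul_one_add_abs_sq_le_exp (by positivity) hη _) (norm_nonneg _))) hcenter (by linarith)
  calc
    ‖logDeriv riemannZeta₁ s‖ ≤ _ := hbound
    _ ≤ 8 * 2 * (2 / η * A ^ (η / 2) * (1 + |s.im|) ^ η) / (σ - ρ) ^ 2 := by
      rw [sub_sub_sub_cancel_left]
      gcongr
      linarith
    _ = _ := by ring

end LogDeriv

section ContourShift

variable {E : Type*} [NormedAddCommGroup E] [NormedSpace ℂ E] {f : ℂ → E} {a b B e : ℝ}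

lemma verticalIntegrable_of_norm_le {c : ℝ} (he : 1 < e)
    (hf : ∀ s : ℂ, s.re = c → DifferentiableAt ℂ f s)
    (hB : ∀ s : ℂ, s.re = c → ‖f s‖ ≤ B * (1 + |s.im|) ^ (-e)) :
    VerticalIntegrable f c := by
  have hmajorant : Integrable fun y : ℝ ↦ B * (1 + ‖y‖) ^ (-e) :=
    (integrable_one_add_norm (by simpa using he)).const_mul B
  have hcont : Continuous fun y : ℝ ↦ f (c + y * I) := continuous_iff_continuousAt.2 fun y ↦
    ContinuousAt.comp (f := fun y : ℝ ↦ (c : ℂ) + y * I) (hf _ (by simp)).continuousAt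
      (by fun_prop)
  refine hmajorant.mono' hcont.aestronglyMeasurable (.of_forall fun y ↦ ?_)
  simpa using hB (c + y * I) (by simp)

lemma tendsto_integral_horizontalSegment_zero {u : ℝ → ℝ} (hab : a ≤ b) (he : 0 < e)
    (hu : Tendsto (fun T ↦ |u T|) atTop atTop)
    (hB : ∀ s : ℂ, a ≤ s.re → s.re ≤ b → ‖f s‖ ≤ B * (1 + |s.im|) ^ (-e)) :
    Tendsto (fun T : ℝ ↦ ∫ x : ℝ in a..b, f (x + u T * I)) atTop (𝓝 0) := by
  have hdecay : Tendsto (fun T : ℝ ↦ B * (1 + |u T|) ^ (-e) * |b - a|) atTop (𝓝 0) := by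
    simpa using (((tendsto_rpow_neg_atTop he).comp
      (tendsto_atTop_add_const_left _ 1 hu)).const_mul B).mul_const |b - a|
  refine squeeze_zero_norm (fun T ↦ ?_) hdecay
  refine intervalIntegral.norm_integral_le_of_norm_le_const fun x hx ↦ ?_
  rw [uIoc_of_le hab] at hx
  simpa using hB (x + u T * I) (by simpa using hx.1.le) (by simpa using hx.2)

lemma integral_verticalLine_eq_of_norm_le [CompleteSpace E] (hab : a ≤ b) (he : 1 < e)
    (hf : ∀ s : ℂ, a ≤ s.re → s.re ≤ b → DifferentiableAt ℂ f s)
    (hB : ∀ s : ℂ, a ≤ s.re → s.re ≤ b → ‖f s‖ ≤ B * (1 + |s.im|) ^ (-e)) :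
    ∫ y : ℝ, f (a + y * I) = ∫ y : ℝ, f (b + y * I) := by
  have hvert {c : ℝ} (hac : a ≤ c) (hcb : c ≤ b) :
      Tendsto (fun T : ℝ ↦ I • ∫ y in (-T)..T, f (c + y * I)) atTop
        (𝓝 (I • ∫ y : ℝ, f (c + y * I))) :=
    (intervalIntegral_tendsto_integral (verticalIntegrable_of_norm_le he
      (fun s hs ↦ hf s (hs ▸ hac) (hs ▸ hcb)) fun s hs ↦ hB s (hs ▸ hac) (hs ▸ hcb))
      tendsto_neg_atTop_atBot tendsto_id).const_smul I
  have hbot := tendsto_integral_horizontalSegment_zero (u := fun T ↦ -T) hab (one_pos.trans he)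
    (by simpa using tendsto_abs_atTop_atTop) hB
  have htop := tendsto_integral_horizontalSegment_zero (u := id) hab (one_pos.trans he)
    tendsto_abs_atTop_atTop hB
  have hlim := ((hbot.sub htop).add (hvert hab le_rfl)).sub (hvert le_rfl hab)
  have hrect (T : ℝ) : (∫ x in a..b, f (x + (-T : ℝ) * I)) - (∫ x in a..b, f (x + T * I)) +
      (I • ∫ y in (-T)..T, f (b + y * I)) - I • ∫ y in (-T)..T, f (a + y * I) = 0 := by
    refine Complex.integral_boundary_rect_eq_zero_of_differentiableOn f ⟨a, -T⟩ ⟨b, T⟩ fun s hs ↦ ?_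
    rw [mem_reProdIm, uIcc_of_le hab] at hs
    exact (hf s hs.1.1 hs.1.2).differentiableWithinAt
  have hzero := tendsto_nhds_unique (hlim.congr hrect) tendsto_const_nhds
  rw [sub_zero, zero_add, ← smul_sub, smul_eq_zero_iff_right I_ne_zero, sub_eq_zero] at hzero
  exact hzero.symm

end ContourShift

/-! ### A smoothed Perron formula -/

section Perron

lemma hasMellin_congr_Ioi {f g : ℝ → ℂ} {s m : ℂ} (hg : HasMellin g s m) (hfg : EqOn f g (Ioi 0)) :
    HasMellin f s m := by
  have hcongr : EqOn (fun t : ℝ ↦ (t : ℂ) ^ (s - 1) • g t) (fun t ↦ (t : ℂ) ^ (s - 1) • f t)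
      (Ioi 0) := fun t ht ↦ by simp only [hfg ht]
  exact ⟨hg.1.congr_fun hcongr measurableSet_Ioi,
    (setIntegral_congr_fun measurableSet_Ioi hcongr).symm.trans hg.2⟩

lemma hasMellin_max_one_sub_zero {s : ℂ} (hs : 0 < s.re) :
    HasMellin (fun t : ℝ ↦ ((max (1 - t) 0 : ℝ) : ℂ)) s (s * (s + 1))⁻¹ := by
  have hone := hasMellin_one_Ioc hs
  have hid := hasMellin_cpow_Ioc 1 (s := s) (by rw [one_re]; linarith)
  have hdiff := hasMellin_sub hone.1 hid.1
  have hs0 : s ≠ 0 := fun h ↦ by simp [h] at hs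
  have hs1 : s + 1 ≠ 0 := fun h ↦ by
    rw [eq_neg_of_add_eq_zero_left h, neg_re, one_re] at hs
    linarith
  have hvalue : (s * (s + 1))⁻¹ = 1 / s - 1 / (s + 1) := by field_simp; ring
  rw [hone.2, hid.2, ← hvalue] at hdiff
  refine hasMellin_congr_Ioi hdiff fun t ht ↦ ?_
  rcases le_or_gt t 1 with ht1 | ht1
  · simp [indicator_of_mem (show t ∈ Ioc 0 1 from ⟨ht, ht1⟩), max_eq_left (sub_nonneg.2 ht1)]
  · simp [ht1, ht1.le]

lemma hasMellin_max_one_sub_zero_sq_div {s : ℂ} (hs : 1 < s.re) :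
    HasMellin (fun t : ℝ ↦ ((max (1 - t) 0 ^ 2 / (2 * t) : ℝ) : ℂ)) s
      ((s * (s + 1))⁻¹ * (s - 1)⁻¹) := by
  have hinv := hasMellin_cpow_Ioc (-1) (s := s) (by simpa using hs)
  have hid := hasMellin_cpow_Ioc 1 (s := s) (by rw [one_re]; linarith)
  have hone := hasMellin_one_Ioc (one_pos.trans hs)
  have hadd := hasMellin_add hinv.1 hid.1
  have hhalf := hasMellin_const_smul hadd.1 (1 / 2 : ℂ)
  have hdiff := hasMellin_sub hhalf.1 hone.1
  have hvalue : (s * (s + 1))⁻¹ * (s - 1)⁻¹ =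
      (1 / 2 : ℂ) • (1 / (s + -1) + 1 / (s + 1)) - 1 / s := by
    have hs0 : s ≠ 0 := fun h ↦ by norm_num [h] at hs
    have hs1 : s - 1 ≠ 0 := fun h ↦ by simp [sub_eq_zero.1 h] at hs
    have hs2 : s + 1 ≠ 0 := fun h ↦ by norm_num [eq_neg_of_add_eq_zero_left h] at hs
    rw [smul_eq_mul, ← sub_eq_add_neg]
    field_simp
    ring
  rw [hhalf.2, hadd.2, hone.2, hinv.2, hid.2, ← hvalue] at hdiff
  refine hasMellin_congr_Ioi hdiff fun t ht ↦ ?_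
  rcases le_or_gt t 1 with ht1 | ht1
  · have ht0 : (t : ℂ) ≠ 0 := ofReal_ne_zero.2 (mem_Ioi.1 ht).ne'
    simp only [indicator_of_mem (show t ∈ Ioc 0 1 from ⟨ht, ht1⟩),
      max_eq_left (sub_nonneg.2 ht1), cpow_neg_one, cpow_one, smul_eq_mul]
    push_cast
    field_simp
    ring
  · simp [ht1, ht1.le]

variable {σ t x : ℝ}

lemma norm_cpow_neg_verticalLine (ht : 0 < t) (y : ℝ) :
    ‖(t : ℂ) ^ (-(σ + y * I))‖ = t ^ (-σ) := by
  simp [norm_cpow_eq_rpow_re_of_pos ht]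

lemma integrable_cpow_neg_mul_verticalLine {f : ℂ → ℂ} (ht : 0 < t)
    (hf : VerticalIntegrable f σ) :
    Integrable fun y : ℝ ↦ (t : ℂ) ^ (-(σ + y * I)) * f (σ + y * I) := by
  have hcont : Continuous fun y : ℝ ↦ (t : ℂ) ^ (-(σ + y * I)) :=
    Continuous.const_cpow (by fun_prop) (.inl (ofReal_ne_zero.2 ht.ne'))
  exact hf.bdd_mul hcont.aestronglyMeasurable
    (.of_forall fun y ↦ (norm_cpow_neg_verticalLine ht y).le)

lemma mul_div_cpow_neg_eq_mul_term {a : ℕ → ℂ} (hx : 0 < x) (ha0 : a 0 = 0) (s : ℂ) (n : ℕ) :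
    a n * ((n / x : ℝ) : ℂ) ^ (-s) = ((x⁻¹ : ℝ) : ℂ) ^ (-s) * LSeries.term a s n := by
  rcases eq_or_ne n 0 with rfl | hn
  · simp [ha0]
  · rw [LSeries.term_of_ne_zero hn, div_eq_mul_inv, ofReal_mul,
      mul_cpow_ofReal_nonneg n.cast_nonneg (inv_nonneg.2 hx.le), ofReal_natCast, cpow_neg (n : ℂ)]
    ring

variable {k : ℝ → ℂ} {K : ℂ → ℂ}

lemma mellinInv_eq_of_hasMellin (ht : 0 < t) (hk : ∀ s : ℂ, s.re = σ → HasMellin k s (K s))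
    (hK : VerticalIntegrable K σ) (hcont : ContinuousAt k t) : mellinInv σ K t = k t := by
  have hline (y : ℝ) : mellin k (σ + y * I) = K (σ + y * I) := (hk _ (by simp)).2
  rw [← mellinInv_mellin_eq σ k ht (hk σ (ofReal_re σ)).1
    (by simpa only [VerticalIntegrable, hline] using hK) hcont]
  simp only [mellinInv, hline]

lemma hasSum_mul_div_eq_mellinInv {a : ℕ → ℂ} (hx : 0 < x) (ha0 : a 0 = 0)
    (ha : LSeriesSummable a σ) (hk : ∀ s : ℂ, s.re = σ → HasMellin k s (K s))
    (hK : VerticalIntegrable K σ) (hcont : ContinuousOn k (Ioi 0)) :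
    HasSum (fun n : ℕ ↦ a n * k (n / x)) (mellinInv σ (fun s ↦ LSeries a s * K s) x⁻¹) := by
  have hdiv {n : ℕ} (hn : n ≠ 0) : 0 < n / x := div_pos (by positivity) hx
  set F : ℕ → ℝ → ℂ := fun n y ↦ a n * (((n / x : ℝ) : ℂ) ^ (-(σ + y * I)) * K (σ + y * I))
  have hF (n : ℕ) (y : ℝ) : F n y = ((x⁻¹ : ℝ) : ℂ) ^ (-(σ + y * I)) *
      (LSeries.term a (σ + y * I) n * K (σ + y * I)) := by
    rw [← mul_assoc, ← mul_div_cpow_neg_eq_mul_term hx ha0, mul_assoc]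
  have hFint (n : ℕ) : Integrable (F n) := by
    rcases eq_or_ne n 0 with rfl | hn
    · simp [F, ha0]
    · exact (integrable_cpow_neg_mul_verticalLine (hdiv hn) hK).const_mul _
  have hFnorm (n : ℕ) : ∫ y, ‖F n y‖ =
      ‖LSeries.term a σ n‖ * ∫ y : ℝ, x⁻¹ ^ (-σ) * ‖K (σ + y * I)‖ := by
    rw [← integral_const_mul]
    congr with y
    rw [hF, norm_mul, norm_mul, norm_cpow_neg_verticalLine (inv_pos.2 hx), LSeries.norm_term_eq,
      LSeries.norm_term_eq]
    simp only [add_re, mul_re, ofReal_re, I_re, ofReal_im, I_im, mul_zero, zero_mul, sub_zero,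
      add_zero]
    ring
  have hsum := hasSum_integral_of_summable_integral_norm hFint
    (by simpa only [hFnorm] using ha.norm.mul_right _)
  have hvalue : mellinInv σ (fun s ↦ LSeries a s * K s) x⁻¹ =
      (1 / (2 * Real.pi)) • ∫ y, ∑' n, F n y := by
    simp only [mellinInv, hF, tsum_mul_left, tsum_mul_right, LSeries, smul_eq_mul]
  rw [hvalue]
  refine (hsum.const_smul (1 / (2 * Real.pi))).congr_fun fun n ↦ ?_
  rcases eq_or_ne n 0 with rfl | hn
  · simp [F, ha0]
  · rw [← mellinInv_eq_of_hasMellin (hdiv hn) hk hK (hcont.continuousAt (Ioi_mem_nhds (hdiv hn)))]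
    simp only [F, mellinInv, smul_eq_mul, integral_const_mul, mul_smul_comm]

lemma verticalIntegrable_LSeries_mul {a : ℕ → ℂ} (ha : LSeriesSummable a σ)
    (hK : VerticalIntegrable K σ) : VerticalIntegrable (fun s ↦ LSeries a s * K s) σ := by
  have hterm (n : ℕ) (y : ℝ) : ‖LSeries.term a (σ + y * I) n‖ ≤ ‖LSeries.term a σ n‖ :=
    LSeries.norm_term_le_of_re_le_re a (by simp) n
  have hcont : Continuous fun y : ℝ ↦ LSeries a (σ + y * I) :=
    continuous_tsum (fun n ↦ continuous_iff_continuousAt.2 fun y ↦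
      (LSeries.hasDerivAt_term a n _).continuousAt.comp (by fun_prop))
      ha.norm hterm
  exact hK.bdd_mul hcont.aestronglyMeasurable
    (.of_forall fun y ↦ tsum_of_norm_bounded ha.norm.hasSum fun n ↦ hterm n y)

end Perron

/-! ### The Chebyshev functions under a quasi-Riemann hypothesis -/

section ChebyshevPsi

open scoped ArithmeticFunction.vonMangoldt

/-- The integral `∫₀ˣ ψ` of the Chebyshev function, written as a sum over prime powers, minus the
main term `(x - 1) ^ 2 / 2`. -/
noncomputable def integratedPsiError (x : ℝ) : ℝ :=
  ∑ n ∈ Finset.Ioc 0 ⌊x⌋₊, Λ n * (x - n) - (x - 1) ^ 2 / 2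

/-- The function whose inverse Mellin transform at `t ≤ 1` is `t * integratedPsiError t⁻¹`. -/
noncomputable def integratedPsiErrorMellin (s : ℂ) : ℂ :=
  -logDeriv riemannZeta₁ s * (s * (s + 1))⁻¹

lemma LSeries_vonMangoldt_sub_inv {s : ℂ} (hs : 1 < s.re) :
    LSeries (fun n ↦ (Λ n : ℂ)) s - (s - 1)⁻¹ = -logDeriv riemannZeta₁ s := by
  have hs1 : s ≠ 1 := by rintro rfl; simp at hs
  have hsub : s - 1 ≠ 0 := sub_ne_zero.2 hs1
  have hζ₁ : riemannZeta₁ s ≠ 0 := fun h ↦ riemannZeta_ne_zero_of_one_lt_re hs (by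
    rw [riemannZeta_eq_inv_sub_mul hs1, h, mul_zero])
  rw [ArithmeticFunction.LSeries_vonMangoldt_eq_deriv_riemannZeta_div hs,
    deriv_riemannZeta_eq_neg_inv_sub_sq_mul_add hs1, riemannZeta_eq_inv_sub_mul hs1, logDeriv_apply]
  field_simp
  ring

variable {s : ℂ} {σ : ℝ}

lemma one_add_abs_im_le_mul_norm (hσ : 0 < σ) (hs : σ ≤ s.re) :
    1 + |s.im| ≤ (1 + σ) / σ * ‖s‖ := by
  have hre : σ ≤ ‖s‖ := hs.trans (re_le_norm s)
  rw [div_mul_eq_mul_div, le_div_iff₀ hσ]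
  nlinarith [abs_im_le_norm s]

lemma norm_inv_mul_add_one_le (hσ : 0 < σ) (hs : σ ≤ s.re) :
    ‖(s * (s + 1))⁻¹‖ ≤ ((1 + σ) / σ) ^ 2 * (1 + |s.im|) ^ (-2 : ℝ) := by
  have hs0 : 0 < ‖s‖ := hσ.trans_le (hs.trans (re_le_norm s))
  have hσs : σ ≤ (s + 1).re := by rw [add_re, one_re]; linarith
  have hs1 : 0 < ‖s + 1‖ := hσ.trans_le (hσs.trans (re_le_norm _))
  have hle := mul_le_mul (one_add_abs_im_le_mul_norm hσ hs) (one_add_abs_im_le_mul_norm hσ hσs)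
    (by positivity) (by positivity)
  rw [add_im, one_im, add_zero] at hle
  rw [norm_inv, norm_mul, Real.rpow_neg (by positivity), Real.rpow_two, ← div_eq_mul_inv,
    inv_le_comm₀ (by positivity) (by positivity), inv_div, div_le_iff₀ (by positivity)]
  linarith

lemma verticalIntegrable_inv_mul_add_one (hσ : 0 < σ) :
    VerticalIntegrable (fun s ↦ (s * (s + 1))⁻¹) σ := by
  refine verticalIntegrable_of_norm_le one_lt_two (fun s hs ↦ ?_)
    fun s hs ↦ norm_inv_mul_add_one_le hσ hs.ge
  have hs0 : s ≠ 0 := fun h ↦ by simp [h, hσ.ne] at hs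
  have hs1 : s + 1 ≠ 0 := fun h ↦ by
    rw [eq_neg_of_add_eq_zero_left h, neg_re, one_re] at hs
    linarith
  fun_prop (disch := exact mul_ne_zero hs0 hs1)

lemma verticalIntegrable_inv_mul_add_one_mul_inv (hσ : 1 < σ) :
    VerticalIntegrable (fun s ↦ (s * (s + 1))⁻¹ * (s - 1)⁻¹) σ := by
  have hline (y : ℝ) : σ - 1 ≤ ‖(σ + y * I - 1 : ℂ)‖ := by
    simpa using re_le_norm (σ + y * I - 1 : ℂ)
  have hcont : Continuous fun y : ℝ ↦ (σ + y * I - 1 : ℂ)⁻¹ :=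
    .inv₀ (by fun_prop) fun y ↦ norm_pos_iff.1 (by linarith [hline y])
  refine (verticalIntegrable_inv_mul_add_one (one_pos.trans hσ)).mul_bdd (c := (σ - 1)⁻¹)
    hcont.aestronglyMeasurable (.of_forall fun y ↦ ?_)
  rw [norm_inv]
  exact inv_anti₀ (by linarith) (hline y)

variable {x : ℝ}

lemma sum_vonMangoldt_mul_sub_eq_mellinInv (hx : 0 < x) (hσ : 1 < σ) :
    ((∑ n ∈ Finset.Ioc 0 ⌊x⌋₊, Λ n * (x - n) : ℝ) : ℂ) =
      x * mellinInv σ (fun s ↦ LSeries (fun n ↦ (Λ n : ℂ)) s * (s * (s + 1))⁻¹) x⁻¹ := by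
  have hσ0 : 0 < σ := one_pos.trans hσ
  have hsum := (hasSum_mul_div_eq_mellinInv hx (a := fun n ↦ (Λ n : ℂ)) (by simp)
    (ArithmeticFunction.LSeriesSummable_vonMangoldt (s := σ) (by simpa using hσ))
    (fun s hs ↦ hasMellin_max_one_sub_zero (hs ▸ hσ0))
    (verticalIntegrable_inv_mul_add_one hσ0) (by fun_prop)).mul_left (x : ℂ)
  have hsupport : ∀ n ∉ Finset.Ioc 0 ⌊x⌋₊, (x : ℂ) * (Λ n * (max (1 - n / x) 0 : ℝ)) = 0 := by
    intro n hn
    rcases n.eq_zero_or_pos with rfl | hn0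
    · simp
    · have hxn : x < n := Nat.lt_of_floor_lt (by simpa [hn0] using hn)
      rw [max_eq_right (by rw [sub_nonpos, one_le_div hx]; exact hxn.le)]
      simp
  rw [← (hasSum_sum_of_ne_finset_zero hsupport).unique hsum, ofReal_sum]
  refine Finset.sum_congr rfl fun n hn ↦ ?_
  have hnx : (n : ℝ) ≤ x := (Nat.le_floor_iff hx.le).1 (Finset.mem_Ioc.1 hn).2
  rw [max_eq_left (by rw [sub_nonneg, div_le_one hx]; exact hnx)]
  have hx' : (x : ℂ) ≠ 0 := ofReal_ne_zero.2 hx.ne'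
  push_cast
  field_simp

lemma sub_one_sq_div_two_eq_mellinInv (hx : 1 ≤ x) (hσ : 1 < σ) :
    (((x - 1) ^ 2 / 2 : ℝ) : ℂ) =
      x * mellinInv σ (fun s ↦ (s * (s + 1))⁻¹ * (s - 1)⁻¹) x⁻¹ := by
  have hx0 : 0 < x := one_pos.trans_le hx
  rw [mellinInv_eq_of_hasMellin (inv_pos.2 hx0)
    (fun s hs ↦ hasMellin_max_one_sub_zero_sq_div (hs ▸ hσ))
    (verticalIntegrable_inv_mul_add_one_mul_inv hσ),
    max_eq_left (sub_nonneg.2 (inv_le_one_of_one_le₀ hx)), ← ofReal_mul]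
  · congr 1
    field_simp
  · have : 2 * x⁻¹ ≠ 0 := by positivity
    fun_prop (disch := assumption)

lemma integratedPsiError_eq_mellinInv (hx : 1 ≤ x) (hσ : 1 < σ) :
    (integratedPsiError x : ℂ) = x * mellinInv σ integratedPsiErrorMellin x⁻¹ := by
  have hx0 : 0 < x := one_pos.trans_le hx
  rw [integratedPsiError, ofReal_sub, sum_vonMangoldt_mul_sub_eq_mellinInv hx0 hσ,
    sub_one_sq_div_two_eq_mellinInv hx hσ, ← mul_sub, mellinInv, mellinInv, ← smul_sub]
  simp only [smul_eq_mul]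
  rw [← integral_sub
    (integrable_cpow_neg_mul_verticalLine (inv_pos.2 hx0) (verticalIntegrable_LSeries_mul
      (ArithmeticFunction.LSeriesSummable_vonMangoldt (by simpa using hσ))
      (verticalIntegrable_inv_mul_add_one (one_pos.trans hσ))))
    (integrable_cpow_neg_mul_verticalLine (inv_pos.2 hx0)
      (verticalIntegrable_inv_mul_add_one_mul_inv hσ)), mellinInv]
  congr with y
  rw [integratedPsiErrorMellin, ← LSeries_vonMangoldt_sub_inv (by simpa using hσ), smul_eq_mul]
  ring

lemma norm_cpow_sub_cpow_le {p : ℂ} {v w θ : ℝ} (hp : 1 ≤ p.re) (hθ0 : 0 ≤ θ) (hθ1 : θ ≤ 1)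
    (hw : 0 < w) (hwv : w ≤ v) :
    ‖(v : ℂ) ^ p - (w : ℂ) ^ p‖ ≤ 2 * (‖p‖ * (v - w)) ^ θ * v ^ (p.re - θ) := by
  have hv : 0 < v := hw.trans_le hwv
  have hvw : 0 ≤ v - w := sub_nonneg.2 hwv
  have hlipschitz : ‖(v : ℂ) ^ p - (w : ℂ) ^ p‖ ≤ ‖p‖ * v ^ (p.re - 1) * (v - w) := by
    have hp0 : p ≠ 0 := fun h ↦ by norm_num [h] at hp
    have hmvt := (convex_Icc w v).norm_image_sub_le_of_norm_hasDerivWithin_le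
      (C := ‖p‖ * v ^ (p.re - 1))
      (fun t ht ↦ (hasDerivAt_ofReal_cpow_const (hw.trans_le ht.1).ne' hp0).hasDerivWithinAt)
      (fun t ht ↦ ?_) (left_mem_Icc.2 hwv) (right_mem_Icc.2 hwv)
    · rwa [Real.norm_of_nonneg hvw] at hmvt
    · have ht0 : 0 < t := hw.trans_le ht.1
      rw [norm_mul, norm_cpow_eq_rpow_re_of_pos ht0, sub_re, one_re]
      gcongr
      exact ht.2
  have htrivial : ‖(v : ℂ) ^ p - (w : ℂ) ^ p‖ ≤ 2 * v ^ p.re := by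
    refine (norm_sub_le _ _).trans ?_
    rw [norm_cpow_eq_rpow_re_of_pos hv, norm_cpow_eq_rpow_re_of_pos hw, two_mul]
    gcongr
  set d := ‖(v : ℂ) ^ p - (w : ℂ) ^ p‖
  have hd : 0 ≤ d := norm_nonneg _
  calc
    d = d ^ θ * d ^ (1 - θ) := by
      rw [← Real.rpow_add_of_nonneg hd hθ0 (by linarith), add_sub_cancel, Real.rpow_one]
    _ ≤ (‖p‖ * v ^ (p.re - 1) * (v - w)) ^ θ * (2 * v ^ p.re) ^ (1 - θ) := by gcongr
    _ = 2 ^ (1 - θ) * (‖p‖ * (v - w)) ^ θ * v ^ (p.re - θ) := by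
      rw [mul_right_comm, Real.mul_rpow (x := ‖p‖ * (v - w)) (by positivity) (by positivity),
        Real.mul_rpow zero_le_two (by positivity), ← Real.rpow_mul hv.le, ← Real.rpow_mul hv.le,
        show p.re - θ = (p.re - 1) * θ + p.re * (1 - θ) by ring,
        Real.rpow_add hv]
      ring
    _ ≤ 2 * (‖p‖ * (v - w)) ^ θ * v ^ (p.re - θ) := by
      gcongr
      exact (Real.rpow_le_rpow_of_exponent_le one_le_two (by linarith)).trans_eq (Real.rpow_one 2)

variable {Θ η κ : ℝ}

lemma norm_cpow_add_one_sub_cpow_add_one_le {v w : ℝ} (hs0 : 0 ≤ s.re) (hs2 : s.re ≤ 2)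
    (hκ0 : 0 ≤ κ) (hκ1 : κ ≤ 1) (hw : 0 < w) (hwv : w ≤ v) :
    ‖(v : ℂ) ^ (s + 1) - (w : ℂ) ^ (s + 1)‖ ≤
      6 * (v - w) ^ (1 - κ) * v ^ (s.re + κ) * (1 + |s.im|) ^ (1 - κ) := by
  have hv : 0 < v := hw.trans_le hwv
  have hvw : 0 ≤ v - w := sub_nonneg.2 hwv
  have hnorm : ‖s + 1‖ ≤ 3 * (1 + |s.im|) := by
    refine (norm_le_abs_re_add_abs_im _).trans ?_
    rw [add_re, add_im, one_re, one_im, add_zero, abs_of_nonneg (by linarith)]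
    linarith [abs_nonneg s.im]
  have h3 : (3 : ℝ) ^ (1 - κ) ≤ 3 :=
    (Real.rpow_le_rpow_of_exponent_le (by norm_num) (by linarith)).trans_eq (Real.rpow_one 3)
  calc
    ‖(v : ℂ) ^ (s + 1) - (w : ℂ) ^ (s + 1)‖
      ≤ 2 * (‖s + 1‖ * (v - w)) ^ (1 - κ) * v ^ ((s + 1).re - (1 - κ)) :=
        norm_cpow_sub_cpow_le (by simpa using hs0) (by linarith) (by linarith) hw hwv
    _ ≤ 2 * (3 * (1 + |s.im|) * (v - w)) ^ (1 - κ) * v ^ ((s + 1).re - (1 - κ)) := by gcongr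
    _ = 2 * 3 ^ (1 - κ) * (v - w) ^ (1 - κ) * v ^ (s.re + κ) * (1 + |s.im|) ^ (1 - κ) := by
      rw [Real.mul_rpow (by positivity) hvw, Real.mul_rpow (by positivity) (by positivity),
        show (s + 1).re - (1 - κ) = s.re + κ by rw [add_re, one_re]; ring]
      ring
    _ ≤ 2 * 3 * (v - w) ^ (1 - κ) * v ^ (s.re + κ) * (1 + |s.im|) ^ (1 - κ) := by gcongr
    _ = _ := by ring

lemma QuasiRiemannHypothesis.exists_norm_integratedPsiErrorMellin_le
    (hζ : QuasiRiemannHypothesis Θ) (hΘσ : Θ < σ) (hσ : 0 < σ) (hη : 0 < η) :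
    ∃ C : ℝ, ∀ s : ℂ, σ ≤ s.re → s.re ≤ 2 →
      ‖integratedPsiErrorMellin s‖ ≤ C * (1 + |s.im|) ^ (-(2 - η)) := by
  obtain ⟨C, hC, hlog⟩ := hζ.exists_norm_logDeriv_riemannZeta₁_le hΘσ hσ hη
  refine ⟨C * ((1 + σ) / σ) ^ 2, fun s hσs hs2 ↦ ?_⟩
  calc
    ‖integratedPsiErrorMellin s‖ = ‖logDeriv riemannZeta₁ s‖ * ‖(s * (s + 1))⁻¹‖ := by
      rw [integratedPsiErrorMellin, norm_mul, norm_neg]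
    _ ≤ C * (1 + |s.im|) ^ η * (((1 + σ) / σ) ^ 2 * (1 + |s.im|) ^ (-2 : ℝ)) := by
      gcongr
      · exact hlog s hσs hs2
      · exact norm_inv_mul_add_one_le hσ hσs
    _ = C * ((1 + σ) / σ) ^ 2 * (1 + |s.im|) ^ (-(2 - η)) := by
      rw [neg_sub, sub_eq_add_neg, Real.rpow_add (by positivity)]
      ring

lemma QuasiRiemannHypothesis.differentiableAt_integratedPsiErrorMellin
    (hζ : QuasiRiemannHypothesis Θ) (hΘs : Θ < s.re) (hs : 0 < s.re) :
    DifferentiableAt ℂ integratedPsiErrorMellin s := by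
  have hs0 : s ≠ 0 := fun h ↦ by simp [h] at hs
  have hs1 : s + 1 ≠ 0 := fun h ↦ by
    rw [eq_neg_of_add_eq_zero_left h, neg_re, one_re] at hs
    linarith
  have hlog : DifferentiableAt ℂ (logDeriv riemannZeta₁) s :=
    (differentiable_riemannZeta₁.deriv s).div (differentiable_riemannZeta₁ s)
      (hζ.riemannZeta₁_ne_zero hΘs)
  exact hlog.neg.mul (by fun_prop (disch := exact mul_ne_zero hs0 hs1))

lemma QuasiRiemannHypothesis.integratedPsiError_eq_mellinInv (hζ : QuasiRiemannHypothesis Θ)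
    (hΘσ : Θ < σ) (hσ0 : 0 < σ) (hσ2 : σ ≤ 2) (hx : 1 ≤ x) :
    (integratedPsiError x : ℂ) = x * mellinInv σ integratedPsiErrorMellin x⁻¹ := by
  have hx0 : 0 < x := one_pos.trans_le hx
  obtain ⟨C, hbound⟩ :=
    hζ.exists_norm_integratedPsiErrorMellin_le hΘσ hσ0 (η := 1 / 2) (by norm_num)
  have hshift := integral_verticalLine_eq_of_norm_le
    (f := fun s ↦ ((x⁻¹ : ℝ) : ℂ) ^ (-s) • integratedPsiErrorMellin s) (B := x ^ (2 : ℝ) * C)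
    (e := 2 - 1 / 2) hσ2 (by norm_num) (fun s hs _ ↦ ?_) fun s hσs hs2 ↦ ?_
  · rw [_root_.integratedPsiError_eq_mellinInv hx one_lt_two, mellinInv, mellinInv, hshift]
  · have hx' : ((x⁻¹ : ℝ) : ℂ) ≠ 0 := by exact_mod_cast (inv_pos.2 hx0).ne'
    exact (differentiableAt_id.neg.const_cpow (.inl hx')).smul
      (hζ.differentiableAt_integratedPsiErrorMellin (hΘσ.trans_le hs) (hσ0.trans_le hs))
  · rw [norm_smul, norm_cpow_eq_rpow_re_of_pos (inv_pos.2 hx0), neg_re,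
      Real.inv_rpow hx0.le, ← Real.rpow_neg hx0.le, neg_neg, mul_assoc]
    gcongr
    exact hbound s hσs hs2

lemma QuasiRiemannHypothesis.integratedPsiError_eq_integral (hζ : QuasiRiemannHypothesis Θ)
    (hΘσ : Θ < σ) (hσ0 : 0 < σ) (hσ2 : σ ≤ 2) (hx : 1 ≤ x) :
    (integratedPsiError x : ℂ) = (1 / (2 * Real.pi)) •
      ∫ y : ℝ, (x : ℂ) ^ (σ + y * I + 1) * integratedPsiErrorMellin (σ + y * I) := by
  have hx0 : (x : ℂ) ≠ 0 := ofReal_ne_zero.2 (one_pos.trans_le hx).ne'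
  rw [hζ.integratedPsiError_eq_mellinInv hΘσ hσ0 hσ2 hx, mellinInv, mul_smul_comm,
    ← integral_const_mul]
  congr 2 with y
  rw [cpow_add _ _ hx0, cpow_one, smul_eq_mul, ofReal_inv, cpow_neg,
    inv_cpow _ _ (by rw [arg_ofReal_of_nonneg (by linarith)]; exact Real.pi_pos.ne), inv_inv]
  ring

lemma QuasiRiemannHypothesis.verticalIntegrable_cpow_mul_integratedPsiErrorMellin
    (hζ : QuasiRiemannHypothesis Θ) (hΘσ : Θ < σ) (hσ0 : 0 < σ) (hσ2 : σ ≤ 2) (hx : 0 < x) :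
    VerticalIntegrable (fun s ↦ (x : ℂ) ^ (s + 1) * integratedPsiErrorMellin s) σ := by
  obtain ⟨C, hbound⟩ :=
    hζ.exists_norm_integratedPsiErrorMellin_le hΘσ hσ0 (η := 1 / 2) (by norm_num)
  refine verticalIntegrable_of_norm_le (e := 2 - 1 / 2) (B := x ^ (σ + 1) * C) (by norm_num)
    (fun s hs ↦ ?_) fun s hs ↦ ?_
  · exact ((differentiableAt_id.add_const 1).const_cpow (.inl (ofReal_ne_zero.2 hx.ne'))).mul
      (hζ.differentiableAt_integratedPsiErrorMellin (hs ▸ hΘσ) (hs ▸ hσ0))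
  · rw [norm_mul, norm_cpow_eq_rpow_re_of_pos hx, add_re, one_re, hs, mul_assoc]
    gcongr
    exact hbound s hs.ge (hs ▸ hσ2)

lemma QuasiRiemannHypothesis.exists_abs_integratedPsiError_sub_le (hζ : QuasiRiemannHypothesis Θ)
    (hΘσ : Θ < σ) (hσ0 : 0 < σ) (hσ2 : σ ≤ 2) (hκ0 : 0 < κ) (hκ1 : κ ≤ 1) :
    ∃ K : ℝ, ∀ w v : ℝ, 1 ≤ w → w ≤ v →
      |integratedPsiError v - integratedPsiError w| ≤ K * (v - w) ^ (1 - κ) * v ^ (σ + κ) := by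
  obtain ⟨C, hbound⟩ := hζ.exists_norm_integratedPsiErrorMellin_le hΘσ hσ0 (half_pos hκ0)
  refine ⟨1 / (2 * Real.pi) * (6 * C * ∫ y : ℝ, (1 + |y|) ^ (-(1 + κ / 2))), fun w v hw hwv ↦ ?_⟩
  have hw0 : 0 < w := one_pos.trans_le hw
  have hv0 : 0 < v := hw0.trans_le hwv
  have hintegrand (y : ℝ) :
      ‖(v : ℂ) ^ (σ + y * I + 1) * integratedPsiErrorMellin (σ + y * I) -
        (w : ℂ) ^ (σ + y * I + 1) * integratedPsiErrorMellin (σ + y * I)‖ ≤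
      6 * C * (v - w) ^ (1 - κ) * v ^ (σ + κ) * (1 + |y|) ^ (-(1 + κ / 2)) := by
    have hmellin := hbound (σ + y * I) (by simp) (by simpa using hσ2)
    have hcpow := norm_cpow_add_one_sub_cpow_add_one_le (s := σ + y * I) (by simpa using hσ0.le)
      (by simpa using hσ2) hκ0.le hκ1 hw0 hwv
    simp only [add_re, ofReal_re, re_ofReal_mul, I_re, mul_zero, add_zero, add_im,
      ofReal_im, im_ofReal_mul, I_im, mul_one, zero_add] at hmellin hcpow
    rw [← sub_mul, norm_mul]
    refine (mul_le_mul hcpow hmellin (norm_nonneg _) (by positivity)).trans_eq ?_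
    have hsplit : (1 + |y|) ^ (-(1 + κ / 2)) =
        (1 + |y|) ^ (1 - κ) * (1 + |y|) ^ (-(2 - κ / 2)) := by
      rw [← Real.rpow_add (by positivity)]
      ring_nf
    rw [hsplit]
    ring
  have hinteg : Integrable fun y : ℝ ↦ (1 + |y|) ^ (-(1 + κ / 2)) :=
    integrable_one_add_norm (by simpa using hκ0)
  rw [← Real.norm_eq_abs, ← norm_real, ofReal_sub,
    hζ.integratedPsiError_eq_integral hΘσ hσ0 hσ2 (hw.trans hwv),
    hζ.integratedPsiError_eq_integral hΘσ hσ0 hσ2 hw, ← smul_sub, ← integral_sub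
      (hζ.verticalIntegrable_cpow_mul_integratedPsiErrorMellin hΘσ hσ0 hσ2 hv0)
      (hζ.verticalIntegrable_cpow_mul_integratedPsiErrorMellin hΘσ hσ0 hσ2 hw0),
    norm_smul, Real.norm_of_nonneg (by positivity)]
  refine (mul_le_mul_of_nonneg_left (norm_integral_le_of_norm_le (hinteg.const_mul _)
    (.of_forall hintegrand)) (by positivity)).trans_eq ?_
  rw [integral_const_mul]
  ring

section Sandwich

variable {w v : ℝ}

lemma sum_vonMangoldt_mul_sub_eq (hwv : w ≤ v) :
    ∑ n ∈ Finset.Ioc 0 ⌊v⌋₊, Λ n * (v - n) =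
      ∑ n ∈ Finset.Ioc 0 ⌊w⌋₊, Λ n * (w - n) + (v - w) * Chebyshev.psi w +
        ∑ n ∈ Finset.Ioc ⌊w⌋₊ ⌊v⌋₊, Λ n * (v - n) := by
  rw [← Finset.sum_Ioc_consecutive _ (Nat.zero_le _) (Nat.floor_mono hwv), Chebyshev.psi,
    Finset.mul_sum, ← Finset.sum_add_distrib]
  exact congrArg (· + _) (Finset.sum_congr rfl fun n _ ↦ by ring)

lemma mul_psi_sub_le_integratedPsiError_sub (hw : 0 ≤ w) (hwv : w ≤ v) :
    (v - w) * (Chebyshev.psi w - v) ≤ integratedPsiError v - integratedPsiError w := by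
  have hnonneg : 0 ≤ ∑ n ∈ Finset.Ioc ⌊w⌋₊ ⌊v⌋₊, Λ n * (v - n) := by
    refine Finset.sum_nonneg fun n hn ↦ mul_nonneg ArithmeticFunction.vonMangoldt_nonneg ?_
    exact sub_nonneg.2 ((Nat.le_floor_iff (hw.trans hwv)).1 (Finset.mem_Ioc.1 hn).2)
  rw [integratedPsiError, integratedPsiError, sum_vonMangoldt_mul_sub_eq hwv]
  nlinarith

lemma integratedPsiError_sub_le_mul_psi_sub (hwv : w ≤ v) :
    integratedPsiError v - integratedPsiError w ≤ (v - w) * (Chebyshev.psi v - w + 1) := by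
  have hle : ∑ n ∈ Finset.Ioc ⌊w⌋₊ ⌊v⌋₊, Λ n * (v - n) ≤
      (v - w) * ∑ n ∈ Finset.Ioc ⌊w⌋₊ ⌊v⌋₊, Λ n := by
    rw [Finset.mul_sum]
    refine Finset.sum_le_sum fun n hn ↦ ?_
    rw [mul_comm]
    gcongr
    exact (Nat.lt_of_floor_lt (Finset.mem_Ioc.1 hn).1).le
  have hpsi : Chebyshev.psi v = Chebyshev.psi w + ∑ n ∈ Finset.Ioc ⌊w⌋₊ ⌊v⌋₊, Λ n :=
    (Finset.sum_Ioc_consecutive _ (Nat.zero_le _) (Nat.floor_mono hwv)).symm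
  rw [integratedPsiError, integratedPsiError, sum_vonMangoldt_mul_sub_eq hwv, hpsi]
  nlinarith

end Sandwich

variable {α : ℝ}

lemma rpow_le_two_mul_rpow (hα0 : 0 ≤ α) (hα1 : α ≤ 1) {v : ℝ} (hv : 0 ≤ v) (hx : 0 ≤ x)
    (hvx : v ≤ 2 * x) : v ^ α ≤ 2 * x ^ α :=
  calc
    v ^ α ≤ (2 * x) ^ α := by gcongr
    _ = 2 ^ α * x ^ α := Real.mul_rpow zero_le_two hx
    _ ≤ 2 * x ^ α := by
      gcongr
      exact (Real.rpow_le_rpow_of_exponent_le one_le_two hα1).trans_eq (Real.rpow_one 2)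

lemma QuasiRiemannHypothesis.exists_abs_integratedPsiError_sub_le_mul
    (hζ : QuasiRiemannHypothesis Θ) (hΘα : Θ < α) (hα0 : 0 < α) (hα1 : α ≤ 1) :
    ∃ K : ℝ, 0 ≤ K ∧ ∀ x w v : ℝ, 1 ≤ w → w ≤ v → v ≤ 2 * x → 1 / 2 ≤ v - w →
      |integratedPsiError v - integratedPsiError w| ≤ (v - w) * (K * x ^ α) := by
  obtain ⟨σ, hσ, hσα⟩ := exists_between (max_lt hΘα hα0)
  rw [max_lt_iff] at hσ
  obtain ⟨K, hK⟩ := hζ.exists_abs_integratedPsiError_sub_le (κ := α - σ) hσ.1 hσ.2 (by linarith)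
    (by linarith) (by linarith)
  have hK0 : 0 ≤ K := by
    have hnonneg := (abs_nonneg _).trans (hK 1 2 le_rfl one_le_two)
    norm_num at hnonneg
    exact nonneg_of_mul_nonneg_left hnonneg (by positivity)
  refine ⟨K * 4, by positivity, fun x w v hw hwv hvx hh ↦ ?_⟩
  have hrpow : (v - w) ^ (1 - (α - σ)) ≤ (v - w) * 2 := by
    have hhalf : 1 / 2 ≤ (v - w) ^ (α - σ) :=
      calc
        (1 / 2 : ℝ) = (1 / 2) ^ (1 : ℝ) := (Real.rpow_one _).symm
        _ ≤ (1 / 2) ^ (α - σ) :=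
          Real.rpow_le_rpow_of_exponent_ge (by norm_num) (by norm_num) (by linarith)
        _ ≤ (v - w) ^ (α - σ) := by gcongr
    rw [Real.rpow_sub (by linarith), Real.rpow_one, div_le_iff₀ (by linarith)]
    nlinarith
  calc
    |integratedPsiError v - integratedPsiError w|
      ≤ K * (v - w) ^ (1 - (α - σ)) * v ^ (σ + (α - σ)) := hK w v hw hwv
    _ ≤ K * ((v - w) * 2) * (2 * x ^ α) := by
      rw [add_sub_cancel]
      have hv0 : 0 ≤ v := by linarith
      gcongr
      exact rpow_le_two_mul_rpow hα0.le hα1 (by linarith) (by linarith) hvx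
    _ = (v - w) * (K * 4 * x ^ α) := by ring

theorem QuasiRiemannHypothesis.exists_abs_psi_sub_le (hζ : QuasiRiemannHypothesis Θ)
    (hΘα : Θ < α) (hα0 : 0 < α) (hα1 : α ≤ 1) :
    ∃ K : ℝ, ∀ x : ℝ, 1 ≤ x → |Chebyshev.psi x - x| ≤ K * x ^ α := by
  obtain ⟨K, hK0, hK⟩ := hζ.exists_abs_integratedPsiError_sub_le_mul hΘα hα0 hα1
  refine ⟨K + 2, fun x hx ↦ ?_⟩
  have hx0 : 0 < x := one_pos.trans_le hx
  have hxα1 : 1 ≤ x ^ α := Real.one_le_rpow hx hα0.le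
  rcases lt_or_ge x 2 with hx2 | hx2
  · rw [Chebyshev.psi_eq_zero_of_lt_two hx2, zero_sub, abs_neg, abs_of_pos hx0]
    nlinarith
  have hxα : x ^ α ≤ x := (Real.rpow_le_rpow_of_exponent_le hx hα1).trans_eq (Real.rpow_one x)
  set h := x ^ α / 2 with hh
  have hh0 : 0 < h := by linarith
  have hupper : Chebyshev.psi x - (x + h) ≤ K * x ^ α := by
    have hdiff := (mul_psi_sub_le_integratedPsiError_sub hx0.le
      (le_add_of_nonneg_right hh0.le)).trans ((le_abs_self _).trans
        (hK x x (x + h) hx (by linarith) (by linarith) (by linarith)))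
    rw [add_sub_cancel_left] at hdiff
    exact le_of_mul_le_mul_left hdiff hh0
  have hlower : -(K * x ^ α) ≤ Chebyshev.psi x - (x - h) + 1 := by
    have hdiff := ((neg_le_neg
      (hK x (x - h) x (by linarith) (by linarith) (by linarith) (by linarith))).trans
      (neg_abs_le _)).trans (integratedPsiError_sub_le_mul_psi_sub (sub_le_self x hh0.le))
    rw [sub_sub_cancel, ← mul_neg] at hdiff
    exact le_of_mul_le_mul_left hdiff hh0
  rw [abs_le]
  constructor <;> linarith

theorem QuasiRiemannHypothesis.exists_abs_theta_sub_le (hζ : QuasiRiemannHypothesis Θ)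
    (hΘα : Θ < α) (hα0 : 1 / 2 ≤ α) (hα1 : α ≤ 1) :
    ∃ K : ℝ, ∀ x : ℝ, 1 ≤ x → |Chebyshev.theta x - x| ≤ K * x ^ α := by
  obtain ⟨K, hK⟩ := hζ.exists_abs_psi_sub_le hΘα (by linarith) hα1
  obtain ⟨C, hC⟩ := Chebyshev.psi_sub_theta_le_mul_sqrt
  refine ⟨K + |C|, fun x hx ↦ ?_⟩
  have hgap : Chebyshev.psi x - Chebyshev.theta x ≤ |C| * x ^ α :=
    calc
      Chebyshev.psi x - Chebyshev.theta x ≤ C * √x := hC x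
      _ ≤ |C| * x ^ α := by
        rw [Real.sqrt_eq_rpow]
        gcongr
        exact le_abs_self C
  have hpsi := abs_le.1 (hK x hx)
  rw [add_mul, abs_le]
  constructor <;> linarith [Chebyshev.theta_le_psi x, hpsi.1, hpsi.2]

end ChebyshevPsi
/-! ### Prime pairs in a hyperbolic band -/

section PrimePairs

/-- The primes in the interval `(y, z]`. -/
noncomputable def primesIoc (y z : ℝ) : Finset ℕ := (Finset.Ioc ⌊y⌋₊ ⌊z⌋₊).filter Nat.Prime

/-- The ordered pairs of primes `p, q ∈ (y, z]` in the band `y * z / r < p * q ≤ y * z`. The paper's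
set is the case `y = x ^ c₁`, `z = x ^ (1 - c₁)`, where `y * z = x`. -/
noncomputable def primePairs (y z r : ℝ) : Finset (ℕ × ℕ) :=
  (primesIoc y z ×ˢ primesIoc y z).filter fun pq ↦
    y * z / r < (pq.1 : ℝ) * pq.2 ∧ (pq.1 : ℝ) * pq.2 ≤ y * z

/-- The number of pairs in `primePairs y z r`, each pair `(p, q)` weighted by `log p * log q`. -/
noncomputable def weightedPairCount (y z r : ℝ) : ℝ :=
  ∑ pq ∈ primePairs y z r, Real.log pq.1 * Real.log pq.2

/-- The points `u > y` for which `(u, v)` lies in the band `y * z / r < u * v ≤ y * z`. -/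
noncomputable def bandSection (y z r v : ℝ) : Set ℝ :=
  Ioc (max y (y * z / (r * v))) (y * z / v)

/-- The length of `bandSection y z r v`. -/
noncomputable def bandLength (y z r v : ℝ) : ℝ :=
  y * z / v - max y (y * z / (r * v))

/-- The mass of `bandSection y z r v` for the measure whose distribution function is
`Chebyshev.theta`. -/
noncomputable def bandTheta (y z r v : ℝ) : ℝ :=
  Chebyshev.theta (y * z / v) - Chebyshev.theta (max y (y * z / (r * v)))

variable {y z r u v : ℝ}

lemma mem_primesIoc (hy : 0 ≤ y) (hz : 0 ≤ z) {p : ℕ} :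
    p ∈ primesIoc y z ↔ p.Prime ∧ (p : ℝ) ∈ Ioc y z := by
  rw [primesIoc, Finset.mem_filter, Finset.mem_Ioc, Nat.floor_lt hy, Nat.le_floor_iff hz, and_comm,
    mem_Ioc]

lemma sum_log_primesIoc (hyz : y ≤ z) :
    ∑ p ∈ primesIoc y z, Real.log p = Chebyshev.theta z - Chebyshev.theta y := by
  simp only [Chebyshev.theta, primesIoc, Finset.sum_filter]
  rw [← Finset.sum_Ioc_consecutive _ (Nat.zero_le _) (Nat.floor_mono hyz), add_sub_cancel_left]

lemma measurableSet_bandSection : MeasurableSet (bandSection y z r v) := measurableSet_Ioc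

lemma mem_bandSection (hr : 0 < r) (hv : 0 < v) (hyu : y < u) :
    u ∈ bandSection y z r v ↔ y * z / r < v * u ∧ v * u ≤ y * z := by
  rw [bandSection, mem_Ioc, max_lt_iff, and_iff_right hyu, div_lt_iff₀ (by positivity),
    le_div_iff₀ hv, div_lt_iff₀ hr, mul_comm u v, show u * (r * v) = v * u * r by ring]

lemma mem_bandSection_comm (hr : 0 < r) (hy : 0 ≤ y) (hyu : y < u) (hyv : y < v) :
    u ∈ bandSection y z r v ↔ v ∈ bandSection y z r u := by
  rw [mem_bandSection hr (hy.trans_lt hyv) hyu, mem_bandSection hr (hy.trans_lt hyu) hyv,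
    mul_comm u v]

lemma bandSection_subset (hy : 0 < y) (hyv : y ≤ v) (hz : 0 ≤ z) :
    bandSection y z r v ⊆ Ioc y z := by
  refine Ioc_subset_Ioc (le_max_left _ _) ?_
  rw [div_le_iff₀ (hy.trans_le hyv), mul_comm]
  gcongr

lemma max_div_le_div (hy : 0 < y) (hr : 1 ≤ r) (hv : v ∈ Icc y z) :
    max y (y * z / (r * v)) ≤ y * z / v := by
  have hv0 : 0 < v := hy.trans_le hv.1
  have hz : 0 < z := hv0.trans_le hv.2
  refine max_le ?_ ?_
  · rw [le_div_iff₀ hv0]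
    gcongr
    exact hv.2
  · gcongr
    exact le_mul_of_one_le_left hv0.le hr

open Classical in
lemma bandTheta_eq_sum (hy : 0 < y) (hr : 1 ≤ r) (hv : v ∈ Icc y z) :
    bandTheta y z r v =
      ∑ p ∈ primesIoc y z, if (p : ℝ) ∈ bandSection y z r v then Real.log p else 0 := by
  have hv0 : 0 < v := hy.trans_le hv.1
  have hz : 0 < z := hv0.trans_le hv.2
  rw [bandTheta, ← sum_log_primesIoc (max_div_le_div hy hr hv), ← Finset.sum_filter]
  refine Finset.sum_congr ?_ fun _ _ ↦ rfl
  ext p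
  rw [Finset.mem_filter, mem_primesIoc hy.le hz.le,
    mem_primesIoc (hy.le.trans (le_max_left _ _)) (by positivity), and_assoc]
  exact and_congr_right fun _ ↦
    (and_iff_right_of_imp fun h ↦ bandSection_subset hy hv.1 hz.le h).symm

lemma weightedPairCount_eq_sum (hy : 0 < y) (hyz : y ≤ z) (hr : 1 ≤ r) :
    weightedPairCount y z r = ∑ p ∈ primesIoc y z, Real.log p * bandTheta y z r p := by
  have hz : 0 < z := hy.trans_le hyz
  rw [weightedPairCount, primePairs, Finset.sum_filter, Finset.sum_product]
  refine Finset.sum_congr rfl fun p hp ↦ ?_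
  have hp' := ((mem_primesIoc hy.le hz.le).1 hp).2
  rw [bandTheta_eq_sum hy hr (Ioc_subset_Icc_self hp'), Finset.mul_sum]
  refine Finset.sum_congr rfl fun q hq ↦ ?_
  simp only [mem_bandSection (z := z) (one_pos.trans_le hr) (hy.trans hp'.1)
    ((mem_primesIoc hy.le hz.le).1 hq).2.1, mul_ite, mul_zero]

lemma sum_log_mul_bandLength (hy : 0 < y) (hyz : y ≤ z) (hr : 1 ≤ r) :
    ∑ p ∈ primesIoc y z, Real.log p * bandLength y z r p = ∫ v in y..z, bandTheta y z r v := by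
  classical
  have hz : 0 < z := hy.trans_le hyz
  have hsum : EqOn (bandTheta y z r) (fun v ↦ ∑ p ∈ primesIoc y z,
      Real.log p * (bandSection y z r p).indicator 1 v) (Ioc y z) := fun v hv ↦ by
    rw [bandTheta_eq_sum hy hr (Ioc_subset_Icc_self hv)]
    refine Finset.sum_congr rfl fun p hp ↦ ?_
    rw [indicator_apply, Pi.one_apply, mul_ite, mul_one, mul_zero]
    simp only [mem_bandSection_comm (z := z) (one_pos.trans_le hr) hy.le
      ((mem_primesIoc hy.le hz.le).1 hp).2.1 hv.1]
  rw [intervalIntegral.integral_of_le hyz, setIntegral_congr_fun measurableSet_Ioc hsum,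
    integral_finsetSum]
  · refine Finset.sum_congr rfl fun p hp ↦ ?_
    have hp' := ((mem_primesIoc hy.le hz.le).1 hp).2
    rw [integral_const_mul, integral_indicator_one measurableSet_bandSection,
      measureReal_restrict_apply measurableSet_bandSection,
      inter_eq_left.2 (bandSection_subset hy hp'.1.le hz.le), bandSection,
      Real.volume_real_Ioc_of_le (max_div_le_div hy hr (Ioc_subset_Icc_self hp')), bandLength]
  · exact fun p _ ↦ ((integrable_const 1).indicator measurableSet_bandSection).const_mul _

lemma intervalIntegrable_bandTheta (hy : 0 < y) (hyz : y ≤ z) (hr : 0 < r) :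
    IntervalIntegrable (bandTheta y z r) volume y z := by
  have hz : 0 < z := hy.trans_le hyz
  have hanti {f : ℝ → ℝ} (hf : AntitoneOn f (Icc y z)) :
      IntervalIntegrable (fun v ↦ Chebyshev.theta (f v)) volume y z :=
    AntitoneOn.intervalIntegrable (by
      rw [uIcc_of_le hyz]
      exact Chebyshev.theta_mono.comp_antitoneOn hf)
  refine (hanti fun a ha b _ hab ↦ ?_).sub (hanti fun a ha b _ hab ↦ ?_)
  · have ha0 : 0 < a := hy.trans_le ha.1
    gcongr
  · have ha0 : 0 < a := hy.trans_le ha.1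
    gcongr

lemma intervalIntegrable_const_div {a b : ℝ} (ha : 0 < a) (hab : a ≤ b) (c : ℝ) :
    IntervalIntegrable (fun v ↦ c / v) volume a b :=
  ContinuousOn.intervalIntegrable (continuousOn_const.div continuousOn_id fun _ hv ↦
    (ha.trans_le (uIcc_of_le hab ▸ hv).1).ne')

lemma integral_const_div {a b : ℝ} (ha : 0 < a) (hb : 0 < b) (c : ℝ) :
    ∫ v in a..b, c / v = c * Real.log (b / a) := by
  simp only [div_eq_mul_inv c, intervalIntegral.integral_const_mul, integral_inv_of_pos ha hb]

lemma intervalIntegrable_max_div {a b : ℝ} (ha : 0 < a) (hab : a ≤ b) (hr : 0 < r) :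
    IntervalIntegrable (fun v ↦ max y (y * z / (r * v))) volume a b :=
  ContinuousOn.intervalIntegrable (continuousOn_const.sup (continuousOn_const.div
    (continuousOn_const.mul continuousOn_id) fun _ hv ↦
      (mul_pos hr (ha.trans_le (uIcc_of_le hab ▸ hv).1)).ne'))

lemma integral_max_div (hy : 0 < y) (hr : 1 ≤ r) (hryz : r * y ≤ z) :
    ∫ v in y..z, max y (y * z / (r * v)) =
      y * z / r * (Real.log (z / y) - Real.log r) + y * (z - z / r) := by
  have hr0 : 0 < r := one_pos.trans_le hr
  have hz : 0 < z := (mul_pos hr0 hy).trans_le hryz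
  have hyzr : y ≤ z / r := by rwa [le_div_iff₀ hr0, mul_comm]
  have hzr : z / r ≤ z := div_le_self hz.le hr
  have hleft : ∫ v in y..(z / r), max y (y * z / (r * v)) = ∫ v in y..(z / r), y * z / r / v := by
    refine intervalIntegral.integral_congr fun v hv ↦ ?_
    rw [uIcc_of_le hyzr] at hv
    have hv0 : 0 < v := hy.trans_le hv.1
    rw [div_div, max_eq_right]
    rw [le_div_iff₀ (by positivity)]
    gcongr
    exact (le_div_iff₀' hr0).1 hv.2
  have hright : ∫ v in (z / r)..z, max y (y * z / (r * v)) = ∫ _ in (z / r)..z, y := by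
    refine intervalIntegral.integral_congr fun v hv ↦ ?_
    rw [uIcc_of_le hzr] at hv
    have hv0 : 0 < v := (div_pos hz hr0).trans_le hv.1
    rw [max_eq_left]
    rw [div_le_iff₀ (by positivity)]
    gcongr
    exact (div_le_iff₀' hr0).1 hv.1
  rw [← intervalIntegral.integral_add_adjacent_intervals
      (intervalIntegrable_max_div hy hyzr hr0) (intervalIntegrable_max_div (by positivity) hzr hr0),
    hleft, hright, integral_const_div hy (by positivity), intervalIntegral.integral_const,
    smul_eq_mul, div_right_comm, Real.log_div (by positivity) hr0.ne', mul_comm y (z - z / r)]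

/-- The area of `{(u, v) : y < u ≤ z, y < v ≤ z, y * z / r < u * v ≤ y * z}` divided by `y * z`, as
a function of `L = log (z / y)`. -/
noncomputable def bandFactor (L r : ℝ) : ℝ := L * (1 - 1 / r) - 1 + (Real.log r + 1) / r

lemma intervalIntegrable_bandLength (hy : 0 < y) (hyz : y ≤ z) (hr : 0 < r) :
    IntervalIntegrable (bandLength y z r) volume y z :=
  (intervalIntegrable_const_div hy hyz _).sub (intervalIntegrable_max_div hy hyz hr)

lemma integral_bandLength (hy : 0 < y) (hr : 1 ≤ r) (hryz : r * y ≤ z) :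
    ∫ v in y..z, bandLength y z r v = y * z * bandFactor (Real.log (z / y)) r := by
  have hyz : y ≤ z := (le_mul_of_one_le_left hy.le hr).trans hryz
  have hr0 : 0 < r := one_pos.trans_le hr
  simp only [bandLength]
  rw [intervalIntegral.integral_sub (intervalIntegrable_const_div hy hyz _)
    (intervalIntegrable_max_div hy hyz hr0), integral_const_div hy (hy.trans_le hyz),
    integral_max_div hy hr hryz, bandFactor]
  field_simp
  ring

variable {α K : ℝ}

lemma intervalIntegrable_div_rpow (hy : 0 < y) (hyz : y ≤ z) :
    IntervalIntegrable (fun v ↦ (y * z / v) ^ α) volume y z := by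
  have hz : 0 < z := hy.trans_le hyz
  refine ContinuousOn.intervalIntegrable ((continuousOn_const.div continuousOn_id fun v hv ↦ ?_
    ).rpow_const fun v hv ↦ ?_) <;>
  have hv0 : 0 < v := hy.trans_le (uIcc_of_le hyz ▸ hv).1
  · exact hv0.ne'
  · exact .inl (div_pos (mul_pos hy hz) hv0).ne'

lemma div_rpow_eq_mul_rpow_neg (hy : 0 < y) (hz : 0 < z) (hv : 0 < v) :
    (y * z / v) ^ α = (y * z) ^ α * v ^ (-α) := by
  rw [Real.div_rpow (by positivity) hv.le, Real.rpow_neg hv.le, div_eq_mul_inv]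

lemma integral_div_rpow_eq (hy : 0 < y) (hyz : y ≤ z) :
    ∫ v in y..z, (y * z / v) ^ α = (y * z) ^ α * ∫ v in y..z, v ^ (-α) := by
  rw [← intervalIntegral.integral_const_mul]
  refine intervalIntegral.integral_congr fun v hv ↦ ?_
  exact div_rpow_eq_mul_rpow_neg hy (hy.trans_le hyz) (hy.trans_le (uIcc_of_le hyz ▸ hv).1)

lemma integral_div_rpow_le (hα0 : 0 ≤ α) (hα1 : α < 1) (hy : 0 < y) (hyz : y ≤ z) :
    ∫ v in y..z, (y * z / v) ^ α ≤ (1 - α)⁻¹ * ((z - y) * y ^ α) := by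
  have hz : 0 < z := hy.trans_le hyz
  have hsplit {t : ℝ} (ht : 0 < t) : t ^ α * t ^ (1 - α) = t := by
    rw [← Real.rpow_add ht, add_sub_cancel, Real.rpow_one]
  have hyα : y ≤ z ^ α * y ^ (1 - α) := by
    calc y = y ^ α * y ^ (1 - α) := (hsplit hy).symm
      _ ≤ z ^ α * y ^ (1 - α) := by gcongr
  calc
    ∫ v in y..z, (y * z / v) ^ α = (1 - α)⁻¹ * (y ^ α * (z - z ^ α * y ^ (1 - α))) := by
      rw [integral_div_rpow_eq hy hyz, integral_rpow (.inl (by linarith)), neg_add_eq_sub,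
        Real.mul_rpow hy.le hz.le]
      nth_rw 3 [← hsplit hz]
      ring
    _ ≤ (1 - α)⁻¹ * ((z - y) * y ^ α) := by
      rw [mul_comm (z - y)]
      have : 0 ≤ 1 - α := by linarith
      gcongr

lemma intervalIntegrable_rpow_mul_theta (hy : 0 < y) (hyz : y ≤ z) (β : ℝ) :
    IntervalIntegrable (fun v ↦ v ^ β * Chebyshev.theta v) volume y z :=
  (Chebyshev.theta_mono.intervalIntegrable).continuousOn_mul <|
    continuousOn_id.rpow_const fun _ hv ↦ .inl (hy.trans_le (uIcc_of_le hyz ▸ hv).1).ne'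

lemma sum_log_mul_rpow_neg_eq (hy : 0 < y) (hyz : y ≤ z) :
    ∑ p ∈ primesIoc y z, Real.log p * (p : ℝ) ^ (-α) =
      z ^ (-α) * Chebyshev.theta z - y ^ (-α) * Chebyshev.theta y +
        α * ∫ v in y..z, v ^ (-α - 1) * Chebyshev.theta v := by
  have hderiv {v : ℝ} (hv : v ∈ Icc y z) :
      HasDerivAt (fun v ↦ v ^ (-α)) (-α * v ^ (-α - 1)) v :=
    Real.hasDerivAt_rpow_const (.inl (hy.trans_le hv.1).ne')
  have habel := sum_mul_eq_sub_sub_integral_mul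
    (fun n ↦ if n.Prime then Real.log n else 0) hy.le hyz
    (fun v hv ↦ (hderiv hv).differentiableAt) <| .congr_fun
      (ContinuousOn.integrableOn_Icc (continuousOn_const.mul (continuousOn_id.rpow_const
        fun v hv ↦ .inl (hy.trans_le hv.1).ne'))) (fun v hv ↦ (hderiv hv).deriv.symm)
      measurableSet_Icc
  have htheta (t : ℝ) :
      ∑ n ∈ Finset.Icc 0 ⌊t⌋₊, (if n.Prime then Real.log n else 0) = Chebyshev.theta t := by
    rw [Chebyshev.theta_eq_sum_Icc, Finset.sum_filter]
  simp only [htheta, mul_ite, mul_zero] at habel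
  rw [← Finset.sum_filter, setIntegral_congr_fun (g := fun v ↦ -α * (v ^ (-α - 1) *
    Chebyshev.theta v)) measurableSet_Ioc fun v hv ↦ by
      rw [(hderiv (Ioc_subset_Icc_self hv)).deriv, mul_assoc], integral_const_mul,
    ← intervalIntegral.integral_of_le hyz, neg_mul, sub_neg_eq_add] at habel
  simpa only [primesIoc, mul_comm (Real.log _)] using habel

lemma integral_rpow_neg_eq (hα : α < 1) (hy : 0 < y) (hyz : y ≤ z) :
    ∫ v in y..z, v ^ (-α) =
      z ^ (-α) * z - y ^ (-α) * y + α * ∫ v in y..z, v ^ (-α - 1) * v := by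
  have hz : 0 < z := hy.trans_le hyz
  have hshift : ∫ v in y..z, v ^ (-α - 1) * v = ∫ v in y..z, v ^ (-α) :=
    intervalIntegral.integral_congr fun v hv ↦ by
      have hv0 : 0 < v := hy.trans_le (uIcc_of_le hyz ▸ hv).1
      simp only [Real.rpow_sub_one hv0.ne', div_mul_cancel₀ _ hv0.ne']
  have hα0 : 1 - α ≠ 0 := by linarith
  rw [hshift, integral_rpow (.inl (by linarith)), Real.rpow_add_one hz.ne',
    Real.rpow_add_one hy.ne', neg_add_eq_sub]
  field_simp
  ring

lemma rpow_neg_mul_abs_theta_sub_le (hθ : ∀ x : ℝ, 1 ≤ x → |Chebyshev.theta x - x| ≤ K * x ^ α)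
    (hv : 1 ≤ v) : v ^ (-α) * |Chebyshev.theta v - v| ≤ K := by
  have hv0 : 0 < v := one_pos.trans_le hv
  calc
    v ^ (-α) * |Chebyshev.theta v - v| ≤ v ^ (-α) * (K * v ^ α) := by gcongr; exact hθ v hv
    _ = K := by rw [mul_left_comm, ← Real.rpow_add hv0, neg_add_cancel, Real.rpow_zero, mul_one]

lemma abs_sum_log_mul_rpow_neg_sub_integral_le
    (hθ : ∀ x : ℝ, 1 ≤ x → |Chebyshev.theta x - x| ≤ K * x ^ α) (hα0 : 0 ≤ α) (hα1 : α < 1)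
    (hy : 1 ≤ y) (hyz : y ≤ z) :
    |∑ p ∈ primesIoc y z, Real.log p * (p : ℝ) ^ (-α) - ∫ v in y..z, v ^ (-α)| ≤
      K * (2 + α * Real.log (z / y)) := by
  have hy0 : 0 < y := one_pos.trans_le hy
  have hz0 : 0 < z := hy0.trans_le hyz
  have hintegrable : IntervalIntegrable (fun v ↦ v ^ (-α - 1) * v) volume y z :=
    ContinuousOn.intervalIntegrable (ContinuousOn.mul (continuousOn_id.rpow_const fun _ hv ↦
      .inl (hy0.trans_le (uIcc_of_le hyz ▸ hv).1).ne') continuousOn_id)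
  have hintegral : |∫ v in y..z, v ^ (-α - 1) * (Chebyshev.theta v - v)| ≤
      K * Real.log (z / y) := by
    rw [← integral_const_div hy0 hz0, ← Real.norm_eq_abs]
    refine intervalIntegral.norm_integral_le_of_norm_le hyz (.of_forall fun v hv ↦ ?_)
      (intervalIntegrable_const_div hy0 hyz K)
    have hv0 : 0 < v := hy0.trans hv.1
    rw [norm_mul, Real.norm_of_nonneg (by positivity), Real.rpow_sub_one hv0.ne',
      div_mul_eq_mul_div]
    gcongr
    exact rpow_neg_mul_abs_theta_sub_le hθ (hy.trans hv.1.le)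
  have hsplit : ∑ p ∈ primesIoc y z, Real.log p * (p : ℝ) ^ (-α) - ∫ v in y..z, v ^ (-α) =
      z ^ (-α) * (Chebyshev.theta z - z) - y ^ (-α) * (Chebyshev.theta y - y) +
        α * ∫ v in y..z, v ^ (-α - 1) * (Chebyshev.theta v - v) := by
    simp only [mul_sub]
    rw [sum_log_mul_rpow_neg_eq hy0 hyz, integral_rpow_neg_eq hα1 hy0 hyz,
      intervalIntegral.integral_sub (intervalIntegrable_rpow_mul_theta hy0 hyz _) hintegrable]
    ring
  have hendpoint {v : ℝ} (hv : 1 ≤ v) : |v ^ (-α) * (Chebyshev.theta v - v)| ≤ K := by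
    rw [abs_mul, abs_of_nonneg (by positivity)]
    exact rpow_neg_mul_abs_theta_sub_le hθ hv
  calc
    _ ≤ K + K + α * (K * Real.log (z / y)) := by
      rw [hsplit]
      refine (abs_add_le _ _).trans (add_le_add ((abs_sub _ _).trans
        (add_le_add (hendpoint (hy.trans hyz)) (hendpoint hy))) ?_)
      rw [abs_mul, abs_of_nonneg hα0]
      gcongr
    _ = K * (2 + α * Real.log (z / y)) := by ring

lemma one_le_of_abs_theta_sub_le (hθ : ∀ x : ℝ, 1 ≤ x → |Chebyshev.theta x - x| ≤ K * x ^ α) :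
    1 ≤ K := by
  simpa [Chebyshev.theta_eq_zero_of_lt_two one_lt_two] using hθ 1 le_rfl

lemma abs_bandTheta_sub_bandLength_le
    (hθ : ∀ x : ℝ, 1 ≤ x → |Chebyshev.theta x - x| ≤ K * x ^ α) (hα : 0 ≤ α) (hy : 1 ≤ y)
    (hr : 1 ≤ r) (hv : v ∈ Icc y z) :
    |bandTheta y z r v - bandLength y z r v| ≤ 2 * K * (y * z / v) ^ α := by
  have hK : 0 ≤ K := zero_le_one.trans (one_le_of_abs_theta_sub_le hθ)
  set a := max y (y * z / (r * v)) with ha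
  have ha1 : 1 ≤ a := hy.trans (le_max_left _ _)
  have hab : a ≤ y * z / v := max_div_le_div (one_pos.trans_le hy) hr hv
  calc
    |bandTheta y z r v - bandLength y z r v|
      = |(Chebyshev.theta (y * z / v) - y * z / v) - (Chebyshev.theta a - a)| := by
        rw [bandTheta, bandLength, ← ha, sub_sub_sub_comm]
    _ ≤ K * (y * z / v) ^ α + K * a ^ α :=
      (abs_sub _ _).trans (add_le_add (hθ _ (ha1.trans hab)) (hθ a ha1))
    _ ≤ K * (y * z / v) ^ α + K * (y * z / v) ^ α := by gcongr
    _ = 2 * K * (y * z / v) ^ α := by ring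

lemma sum_log_mul_div_rpow_le (hθ : ∀ x : ℝ, 1 ≤ x → |Chebyshev.theta x - x| ≤ K * x ^ α)
    (hα0 : 0 ≤ α) (hα1 : α < 1) (hy : 1 ≤ y) (hyz : y ≤ z) :
    ∑ p ∈ primesIoc y z, Real.log p * (y * z / p) ^ α ≤
      (∫ v in y..z, (y * z / v) ^ α) + K * ((y * z) ^ α * (2 + α * Real.log (z / y))) := by
  have hy0 : 0 < y := one_pos.trans_le hy
  have hz0 : 0 < z := hy0.trans_le hyz
  have hfactor : ∑ p ∈ primesIoc y z, Real.log p * (y * z / p) ^ α =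
      (y * z) ^ α * ∑ p ∈ primesIoc y z, Real.log p * (p : ℝ) ^ (-α) := by
    rw [Finset.mul_sum]
    refine Finset.sum_congr rfl fun p hp ↦ ?_
    rw [div_rpow_eq_mul_rpow_neg hy0 hz0 (hy0.trans ((mem_primesIoc hy0.le hz0.le).1 hp).2.1),
      mul_left_comm]
  have hsum := (abs_sub_le_iff.1
    (abs_sum_log_mul_rpow_neg_sub_integral_le hθ hα0 hα1 hy hyz)).1
  rw [hfactor, integral_div_rpow_eq hy0 hyz, mul_left_comm K, ← mul_add]
  gcongr
  linarith

lemma abs_weightedPairCount_sub_integral_le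
    (hθ : ∀ x : ℝ, 1 ≤ x → |Chebyshev.theta x - x| ≤ K * x ^ α) (hα0 : 0 ≤ α) (hα1 : α < 1)
    (hy : 1 ≤ y) (hyz : y ≤ z) (hr : 1 ≤ r) :
    |weightedPairCount y z r - ∫ v in y..z, bandTheta y z r v| ≤
      2 * K * ((∫ v in y..z, (y * z / v) ^ α) +
        K * ((y * z) ^ α * (2 + α * Real.log (z / y)))) := by
  have hK : 0 ≤ K := zero_le_one.trans (one_le_of_abs_theta_sub_le hθ)
  have hy0 : 0 < y := one_pos.trans_le hy
  have hz0 : 0 < z := hy0.trans_le hyz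
  rw [weightedPairCount_eq_sum hy0 hyz hr, ← sum_log_mul_bandLength hy0 hyz hr,
    ← Finset.sum_sub_distrib]
  calc
    _ ≤ ∑ p ∈ primesIoc y z, 2 * K * (Real.log p * (y * z / p) ^ α) := by
      refine (Finset.abs_sum_le_sum_abs _ _).trans (Finset.sum_le_sum fun p hp ↦ ?_)
      have hp' := ((mem_primesIoc hy0.le hz0.le).1 hp).2
      rw [← mul_sub, abs_mul, abs_of_nonneg (Real.log_natCast_nonneg p), mul_left_comm]
      gcongr
      exact abs_bandTheta_sub_bandLength_le hθ hα0 hy hr (Ioc_subset_Icc_self hp')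
    _ ≤ _ := by
      rw [← Finset.mul_sum]
      gcongr
      exact sum_log_mul_div_rpow_le hθ hα0 hα1 hy hyz

lemma abs_integral_bandTheta_sub_integral_bandLength_le
    (hθ : ∀ x : ℝ, 1 ≤ x → |Chebyshev.theta x - x| ≤ K * x ^ α) (hα : 0 ≤ α)
    (hy : 1 ≤ y) (hyz : y ≤ z) (hr : 1 ≤ r) :
    |(∫ v in y..z, bandTheta y z r v) - ∫ v in y..z, bandLength y z r v| ≤
      2 * K * ∫ v in y..z, (y * z / v) ^ α := by
  have hy0 : 0 < y := one_pos.trans_le hy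
  have hr0 : 0 < r := one_pos.trans_le hr
  rw [← intervalIntegral.integral_sub (intervalIntegrable_bandTheta hy0 hyz hr0)
    (intervalIntegrable_bandLength hy0 hyz hr0), ← intervalIntegral.integral_const_mul,
    ← Real.norm_eq_abs]
  exact intervalIntegral.norm_integral_le_of_norm_le hyz
    (.of_forall fun v hv ↦
      abs_bandTheta_sub_bandLength_le hθ hα hy hr (Ioc_subset_Icc_self hv))
    ((intervalIntegrable_div_rpow hy0 hyz).const_mul _)

theorem abs_weightedPairCount_sub_le
    (hθ : ∀ x : ℝ, 1 ≤ x → |Chebyshev.theta x - x| ≤ K * x ^ α) (hα0 : 0 ≤ α) (hα1 : α < 1)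
    (hy : 1 ≤ y) (hr : 1 ≤ r) (hryz : r * y ≤ z) :
    |weightedPairCount y z r - y * z * bandFactor (Real.log (z / y)) r| ≤
      2 * K * (2 * ((1 - α)⁻¹ * ((z - y) * y ^ α)) +
        K * ((y * z) ^ α * (2 + α * Real.log (z / y)))) := by
  have hK : 0 ≤ K := zero_le_one.trans (one_le_of_abs_theta_sub_le hθ)
  have hy0 : 0 < y := one_pos.trans_le hy
  have hyz : y ≤ z := (le_mul_of_one_le_left hy0.le hr).trans hryz
  calc
    _ ≤ 2 * K * ((∫ v in y..z, (y * z / v) ^ α) +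
          K * ((y * z) ^ α * (2 + α * Real.log (z / y)))) +
        2 * K * ∫ v in y..z, (y * z / v) ^ α := by
      rw [← integral_bandLength hy0 hr hryz]
      exact (abs_sub_le _ _ _).trans (add_le_add
        (abs_weightedPairCount_sub_integral_le hθ hα0 hα1 hy hyz hr)
        (abs_integral_bandTheta_sub_integral_bandLength_le hθ hα0 hy hyz hr))
    _ = 2 * K * (2 * (∫ v in y..z, (y * z / v) ^ α) +
        K * ((y * z) ^ α * (2 + α * Real.log (z / y)))) := by ring
    _ ≤ _ := by
      gcongr
      exact integral_div_rpow_le hα0 hα1 hy0 hyz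

end PrimePairs

/-! ### From the weighted to the unweighted count -/

section PairCount

variable {y z r s t L α K E T : ℝ}

lemma one_sub_one_div_nonneg (hr : 1 ≤ r) : 0 ≤ 1 - 1 / r :=
  sub_nonneg.2 ((div_le_one (one_pos.trans_le hr)).2 hr)

lemma one_sub_one_div_le_log (hr : 0 < r) : 1 - 1 / r ≤ Real.log r := by
  simpa only [one_div] using Real.one_sub_inv_le_log_of_pos hr

lemma bandFactor_le (hr : 0 < r) : bandFactor L r ≤ L * (1 - 1 / r) := by
  have h : (Real.log r + 1) / r ≤ 1 :=
    (div_le_one hr).2 (by linarith [Real.log_le_sub_one_of_pos hr])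
  rw [bandFactor]
  linarith

lemma mul_sub_log_le_bandFactor (hr : 0 < r) :
    (1 - 1 / r) * (L - Real.log r) ≤ bandFactor L r := by
  have h : bandFactor L r - (1 - 1 / r) * (L - Real.log r) = Real.log r - (1 - 1 / r) := by
    rw [bandFactor]
    ring
  linarith [one_sub_one_div_le_log hr]

lemma bandFactor_nonneg (hr : 1 ≤ r) (hrL : Real.log r ≤ L) : 0 ≤ bandFactor L r :=
  (mul_nonneg (one_sub_one_div_nonneg hr) (sub_nonneg.2 hrL)).trans
    (mul_sub_log_le_bandFactor (one_pos.trans_le hr))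

lemma bandFactor_le_bandFactor (hs : 0 < s) (hsr : s ≤ r) (hrL : Real.log r ≤ L) :
    bandFactor L s ≤ bandFactor L r := by
  have hr : 0 < r := hs.trans_le hsr
  have hinv : 0 ≤ 1 / s - 1 / r := sub_nonneg.2 (one_div_le_one_div_of_le hs hsr)
  have hlog : s⁻¹ * (1 - 1 / (r / s)) ≤ s⁻¹ * (Real.log r - Real.log s) := by
    rw [← Real.log_div hr.ne' hs.ne']
    gcongr
    exact one_sub_one_div_le_log (by positivity)
  have hdiff : bandFactor L r - bandFactor L s = (L - Real.log r) * (1 / s - 1 / r) +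
      (s⁻¹ * (Real.log r - Real.log s) - s⁻¹ * (1 - 1 / (r / s))) := by
    rw [bandFactor, bandFactor]
    field_simp
    ring
  linarith [mul_nonneg (sub_nonneg.2 hrL) hinv]

lemma div_four_le_bandFactor_sqrt (hr : 1 ≤ r) (hrL : Real.log r ≤ L) :
    L * (1 - 1 / r) / 4 ≤ bandFactor L √r := by
  have hr0 : 0 < r := one_pos.trans_le hr
  have hs0 : 0 < √r := Real.sqrt_pos.2 hr0
  have hs1 : 1 ≤ √r := Real.one_le_sqrt.2 hr
  have hlog0 : 0 ≤ Real.log r := Real.log_nonneg hr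
  have hfactor : 1 - 1 / r = (1 - 1 / √r) * (1 + 1 / √r) := by
    nth_rw 1 [← Real.mul_self_sqrt hr0.le]
    ring
  have hρ : 1 - 1 / r ≤ (1 - 1 / √r) * 2 := by
    rw [hfactor]
    gcongr
    · exact one_sub_one_div_nonneg hs1
    · linarith [one_sub_one_div_nonneg hs1]
  calc
    L * (1 - 1 / r) / 4 ≤ L * ((1 - 1 / √r) * 2) / 4 := by gcongr; linarith
    _ = (1 - 1 / √r) * (L / 2) := by ring
    _ ≤ (1 - 1 / √r) * (L - Real.log √r) := by
      gcongr
      · exact one_sub_one_div_nonneg hs1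
      · rw [Real.log_sqrt hr0.le]; linarith
    _ ≤ bandFactor L √r := mul_sub_log_le_bandFactor hs0

lemma mem_primePairs (hy : 0 ≤ y) (hz : 0 ≤ z) {pq : ℕ × ℕ} :
    pq ∈ primePairs y z r ↔ (pq.1.Prime ∧ (pq.1 : ℝ) ∈ Ioc y z) ∧
      (pq.2.Prime ∧ (pq.2 : ℝ) ∈ Ioc y z) ∧
        y * z / r < (pq.1 : ℝ) * pq.2 ∧ (pq.1 : ℝ) * pq.2 ≤ y * z := by
  rw [primePairs, Finset.mem_filter, Finset.mem_product, mem_primesIoc hy hz, mem_primesIoc hy hz,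
    and_assoc]

lemma log_mul_eq_two_mul_log_add (hy : 0 < y) (hz : 0 < z) :
    Real.log (y * z) = 2 * Real.log y + Real.log (z / y) := by
  rw [Real.log_mul hy.ne' hz.ne', Real.log_div hz.ne' hy.ne']
  ring

lemma log_mul_log_le_of_mem_primePairs (hy : 0 < y) (hz : 0 < z) {pq : ℕ × ℕ}
    (hpq : pq ∈ primePairs y z r) :
    Real.log pq.1 * Real.log pq.2 ≤ (Real.log y + Real.log (z / y) / 2) ^ 2 := by
  obtain ⟨⟨-, hp, -⟩, ⟨-, hq, -⟩, -, hle⟩ := (mem_primePairs hy.le hz.le).1 hpq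
  have hp0 : (0 : ℝ) < pq.1 := hy.trans hp
  have hq0 : (0 : ℝ) < pq.2 := hy.trans hq
  have hsum : Real.log pq.1 + Real.log pq.2 ≤ 2 * Real.log y + Real.log (z / y) := by
    rw [← Real.log_mul hp0.ne' hq0.ne', ← log_mul_eq_two_mul_log_add hy hz]
    exact Real.log_le_log (by positivity) hle
  calc
    Real.log pq.1 * Real.log pq.2 ≤ (Real.log pq.1 + Real.log pq.2) ^ 2 / 4 := by
      linarith [four_mul_le_sq_add (Real.log pq.1) (Real.log pq.2)]
    _ ≤ (2 * Real.log y + Real.log (z / y)) ^ 2 / 4 := by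
      have := Real.log_natCast_nonneg pq.1
      have := Real.log_natCast_nonneg pq.2
      gcongr
    _ = (Real.log y + Real.log (z / y) / 2) ^ 2 := by ring

lemma weightedPairCount_le_card_mul (hy : 0 < y) (hz : 0 < z) :
    weightedPairCount y z r ≤
      (primePairs y z r).card * (Real.log y + Real.log (z / y) / 2) ^ 2 := by
  rw [weightedPairCount, ← nsmul_eq_mul]
  exact Finset.sum_le_card_nsmul _ _ _ fun pq ↦ log_mul_log_le_of_mem_primePairs hy hz

lemma primePairs_eq_filter (hy : 0 ≤ y) (hz : 0 ≤ z) (hs : 0 < s) (hsr : s ≤ r) :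
    primePairs y z s = (primePairs y z r).filter fun pq ↦ y * z / s < (pq.1 : ℝ) * pq.2 := by
  have hdiv : y * z / r ≤ y * z / s := by gcongr
  ext pq
  simp only [primePairs, Finset.mem_filter]
  exact ⟨fun ⟨hpq, hlt, hle⟩ ↦ ⟨⟨hpq, hdiv.trans_lt hlt, hle⟩, hlt⟩,
    fun ⟨⟨hpq, _, hle⟩, hlt⟩ ↦ ⟨hpq, hlt, hle⟩⟩

lemma sq_le_one_sub_mul_mul {Y a b : ℝ} (hY : 0 < Y) (hL : 0 ≤ L) (ha : Y ≤ a) (hb : Y ≤ b)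
    (hab : 2 * Y + L / 2 ≤ a + b) : Y ^ 2 ≤ (1 - L / (2 * Y + L)) * (a * b) := by
  have hprod : Y ^ 2 + Y * L / 2 ≤ a * b := by
    nlinarith [mul_nonneg (sub_nonneg.2 ha) (sub_nonneg.2 hb)]
  calc
    Y ^ 2 = 2 * Y / (2 * Y + L) * (Y ^ 2 + Y * L / 2) := by field_simp
    _ ≤ 2 * Y / (2 * Y + L) * (a * b) := by gcongr
    _ = (1 - L / (2 * Y + L)) * (a * b) := by field_simp; ring

/- Both logarithms exceed `log y`, but on the outer half `y * z / √r < p * q` of the band their sum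
is at least `2 * log y + log (z / y) / 2`, so there a proportion of the weight can be given away. -/
lemma card_mul_log_sq_le (hy : 1 < y) (hr : 1 ≤ r) (hryz : r * y ≤ z) :
    (primePairs y z r).card * Real.log y ^ 2 ≤ weightedPairCount y z r -
      Real.log (z / y) / (2 * Real.log y + Real.log (z / y)) * weightedPairCount y z √r := by
  have hy0 : 0 < y := one_pos.trans hy
  have hr0 : 0 < r := one_pos.trans_le hr
  have hz0 : 0 < z := (mul_pos hr0 hy0).trans_le hryz
  have hY : 0 < Real.log y := Real.log_pos hy
  have hrL : Real.log r ≤ Real.log (z / y) := Real.log_le_log hr0 ((le_div_iff₀ hy0).2 hryz)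
  have hL : 0 ≤ Real.log (z / y) := (Real.log_nonneg hr).trans hrL
  have hsr : √r ≤ r := Real.sqrt_le_self_iff.2 (.inr hr)
  rw [weightedPairCount, weightedPairCount,
    primePairs_eq_filter hy0.le hz0.le (Real.sqrt_pos.2 hr0) hsr, Finset.sum_filter,
    Finset.mul_sum, ← Finset.sum_sub_distrib, ← nsmul_eq_mul]
  refine Finset.card_nsmul_le_sum _ _ _ fun pq hpq ↦ ?_
  obtain ⟨⟨-, hp, -⟩, ⟨-, hq, -⟩, -⟩ := (mem_primePairs hy0.le hz0.le).1 hpq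
  have hlogp : Real.log y ≤ Real.log pq.1 := Real.log_le_log hy0 hp.le
  have hlogq : Real.log y ≤ Real.log pq.2 := Real.log_le_log hy0 hq.le
  split_ifs with hlt
  · rw [← one_sub_mul]
    refine sq_le_one_sub_mul_mul hY hL hlogp hlogq ?_
    have hlog := Real.log_le_log (by positivity) hlt.le
    rw [Real.log_mul (hy0.trans hp).ne' (hy0.trans hq).ne',
      Real.log_div (by positivity) (Real.sqrt_pos.2 hr0).ne', log_mul_eq_two_mul_log_add hy0 hz0,
      Real.log_sqrt hr0.le] at hlog
    linarith
  · rw [mul_zero, sub_zero, sq]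
    gcongr

lemma sq_div_sq_le_one_sub {Y : ℝ} (hY : 0 < Y) (hL : 0 ≤ L) :
    (Y + L / 2) ^ 2 / (Y + L) ^ 2 ≤ 1 - L / (2 * Y + L) / 2 := by
  have hdiff : (1 - L / (2 * Y + L) / 2) * (Y + L) ^ 2 - (Y + L / 2) ^ 2 =
      L * (6 * Y ^ 2 + 6 * Y * L + L ^ 2) / (4 * (2 * Y + L)) := by
    field_simp
    ring
  rw [div_le_iff₀ (by positivity), ← sub_nonneg, hdiff]
  positivity

lemma le_card_primePairs (hy : 1 < y) (hr : 1 ≤ r) (hryz : r * y ≤ z) (hT : 0 ≤ T)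
    (hW : |weightedPairCount y z r - y * z * bandFactor (Real.log (z / y)) r| ≤ E)
    (hE : E ≤ Real.log (z / y) / (2 * Real.log y + Real.log (z / y)) / 8 *
      (y * z * (Real.log (z / y) * (1 - 1 / r))) + Real.log y ^ 2 * T) :
    y * z * bandFactor (Real.log (z / y)) r / Real.log z ^ 2 - T ≤ (primePairs y z r).card := by
  have hy0 : 0 < y := one_pos.trans hy
  have hr0 : 0 < r := one_pos.trans_le hr
  have hz0 : 0 < z := (mul_pos hr0 hy0).trans_le hryz
  have hY : 0 < Real.log y := Real.log_pos hy
  have hrL : Real.log r ≤ Real.log (z / y) := Real.log_le_log hr0 ((le_div_iff₀ hy0).2 hryz)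
  have hlogz : Real.log z = Real.log y + Real.log (z / y) := by
    rw [Real.log_div hz0.ne' hy0.ne', add_sub_cancel]
  have hcard := weightedPairCount_le_card_mul (r := r) hy0 hz0
  have hquarter := (div_four_le_bandFactor_sqrt hr hrL).trans
    (bandFactor_le_bandFactor (Real.sqrt_pos.2 hr0) (Real.sqrt_le_self_iff.2 (.inr hr)) hrL)
  have hL : 0 ≤ Real.log (z / y) := (Real.log_nonneg hr).trans hrL
  have hA : 0 ≤ bandFactor (Real.log (z / y)) r := bandFactor_nonneg hr hrL
  set Y := Real.log y
  set L := Real.log (z / y)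
  set A := bandFactor L r
  have hmain : y * z * A * ((Y + L / 2) ^ 2 / (Y + L) ^ 2) ≤
      y * z * A * (1 - L / (2 * Y + L) / 2) := by
    gcongr
    exact sq_div_sq_le_one_sub hY hL
  have habsorb : L / (2 * Y + L) / 8 * (y * z * (L * (1 - 1 / r))) ≤
      L / (2 * Y + L) / 8 * (y * z * (4 * A)) := by
    gcongr _ * (_ * ?_)
    linarith
  have hTY : Y ^ 2 * T ≤ (Y + L / 2) ^ 2 * T := by gcongr; linarith
  refine le_of_mul_le_mul_right ?_ (show 0 < (Y + L / 2) ^ 2 by positivity)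
  rw [hlogz, sub_mul, div_mul_eq_mul_div, mul_div_assoc]
  linarith [(abs_le.1 hW).1]

lemma card_primePairs_le (hy : 1 < y) (hr : 1 ≤ r) (hryz : r * y ≤ z)
    (hW : ∀ s ∈ ({r, √r} : Set ℝ),
      |weightedPairCount y z s - y * z * bandFactor (Real.log (z / y)) s| ≤ E)
    (hE : E ≤ Real.log (z / y) / (2 * Real.log y + Real.log (z / y)) / 8 *
      (y * z * (Real.log (z / y) * (1 - 1 / r))) + Real.log y ^ 2 * T) :
    (primePairs y z r).card ≤
      y * z * bandFactor (Real.log (z / y)) r / Real.log y ^ 2 + 2 * T := by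
  have hy0 : 0 < y := one_pos.trans hy
  have hr0 : 0 < r := one_pos.trans_le hr
  have hz0 : 0 < z := (mul_pos hr0 hy0).trans_le hryz
  have hY : 0 < Real.log y := Real.log_pos hy
  have hrL : Real.log r ≤ Real.log (z / y) := Real.log_le_log hr0 ((le_div_iff₀ hy0).2 hryz)
  have hcard := card_mul_log_sq_le hy hr hryz
  have hWr := hW r (mem_insert _ _)
  have hWsqrt := hW √r (mem_insert_of_mem _ rfl)
  have hquarter := div_four_le_bandFactor_sqrt hr hrL
  have hL : 0 ≤ Real.log (z / y) := (Real.log_nonneg hr).trans hrL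
  set Y := Real.log y
  set L := Real.log (z / y)
  set δ := L / (2 * Y + L)
  have hδ1 : δ ≤ 1 := (div_le_one (by positivity)).2 (by linarith)
  have hδE : δ * E ≤ E := mul_le_of_le_one_left ((abs_nonneg _).trans hWr) hδ1
  have hδW : δ * (y * z * (L * (1 - 1 / r) / 4) - E) ≤ δ * weightedPairCount y z √r := by
    have : y * z * (L * (1 - 1 / r) / 4) ≤ y * z * bandFactor L √r := by gcongr
    gcongr
    linarith [(abs_le.1 hWsqrt).1]
  refine le_of_mul_le_mul_right ?_ (show 0 < Y ^ 2 by positivity)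
  rw [add_mul, div_mul_cancel₀ _ (by positivity)]
  linarith [(abs_le.1 hWr).2]

lemma one_sub_one_div_le_mul_ceil (hr : 1 < r) (ht : 0 < t) :
    1 - 1 / t ≤ 2 * (1 - 1 / r) * (⌈Real.log t / Real.log r⌉₊ + 1) := by
  have hr0 : 0 < r := one_pos.trans hr
  have hceil : Real.log t ≤ ⌈Real.log t / Real.log r⌉₊ * Real.log r :=
    (div_le_iff₀ (Real.log_pos hr)).1 (Nat.le_ceil _)
  have hρ : 0 ≤ 1 - 1 / r := one_sub_one_div_nonneg hr.le
  rcases le_total r 2 with hr2 | hr2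
  · have hlog : Real.log r ≤ 2 * (1 - 1 / r) := calc
      Real.log r ≤ r * (1 - 1 / r) := by
        rw [mul_one_sub, mul_one_div_cancel hr0.ne']
        exact Real.log_le_sub_one_of_pos hr0
      _ ≤ 2 * (1 - 1 / r) := by gcongr
    calc
      1 - 1 / t ≤ ⌈Real.log t / Real.log r⌉₊ * Real.log r :=
        (one_sub_one_div_le_log ht).trans hceil
      _ ≤ ⌈Real.log t / Real.log r⌉₊ * (2 * (1 - 1 / r)) := by gcongr
      _ ≤ _ := by linarith
  · have hhalf : 1 ≤ 2 * (1 - 1 / r) := by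
      linarith [one_div_le_one_div_of_le two_pos hr2]
    have : (0 : ℝ) ≤ ⌈Real.log t / Real.log r⌉₊ := Nat.cast_nonneg _
    calc
      1 - 1 / t ≤ 1 * 1 := by linarith [one_div_pos.2 ht]
      _ ≤ _ := by gcongr; linarith

lemma one_sub_one_div_div_le {Y : ℝ} (ht : 1 ≤ t) (hY : 1 ≤ Y) :
    (1 - 1 / t) / (3 * Y) ≤ Real.log t / (2 * Y + Real.log t) := by
  have ht0 : 0 < t := one_pos.trans_le ht
  have hlog : 0 ≤ Real.log t := Real.log_nonneg ht
  have hle_log : (1 - 1 / t) * (2 * Y) ≤ Real.log t * (2 * Y) := by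
    gcongr
    exact one_sub_one_div_le_log ht0
  have hle_one : (1 - 1 / t) * Real.log t ≤ Y * Real.log t := by
    gcongr
    linarith [one_div_pos.2 ht0]
  rw [div_le_div_iff₀ (by positivity) (by positivity)]
  linarith

lemma log_mul_rpow_sub_one_le (hα : α < 2 / 3) (hy : 0 < y) :
    Real.log y * y ^ (α - 1) ≤ (2 - 3 * α)⁻¹ * (y ^ (1 / 2 - α)) ^ 2 := calc
  Real.log y * y ^ (α - 1) ≤ y ^ (2 - 3 * α) / (2 - 3 * α) * y ^ (α - 1) := by
    gcongr
    exact Real.log_le_rpow_div hy.le (by linarith)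
  _ = (2 - 3 * α)⁻¹ * (y ^ (1 / 2 - α)) ^ 2 := by
    rw [div_mul_eq_mul_div, ← Real.rpow_add hy, ← Real.rpow_natCast (y ^ _), ← Real.rpow_mul hy.le,
      div_eq_inv_mul]
    congr 2
    push_cast
    ring

lemma one_sub_one_div_le_sqrt_mul_rpow (hK : 0 ≤ K) (hα : α < 2 / 3) (hy : Real.exp 1 ≤ y)
    (hr : 1 < r) (hrt : r ≤ t)
    (hlarge : Real.log t * (1 - 1 / r) / (24 * Real.log y) ≤ K * y ^ (α - 1)) :
    1 - 1 / r ≤ √(24 * K * (2 - 3 * α)⁻¹) * y ^ (1 / 2 - α) := by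
  have hr0 : 0 < r := one_pos.trans hr
  have hy0 : 0 < y := (Real.exp_pos 1).trans_le hy
  have hY : 0 < Real.log y := one_pos.trans_le ((Real.le_log_iff_exp_le hy0).2 hy)
  have hα' : 0 < 2 - 3 * α := by linarith
  have hsq : (1 - 1 / r) ^ 2 ≤ 24 * K * (2 - 3 * α)⁻¹ * (y ^ (1 / 2 - α)) ^ 2 := calc
    (1 - 1 / r) ^ 2 ≤ Real.log t * (1 - 1 / r) := by
      rw [sq]
      gcongr
      · exact one_sub_one_div_nonneg hr.le
      · exact (one_sub_one_div_le_log hr0).trans (Real.log_le_log hr0 hrt)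
    _ ≤ K * y ^ (α - 1) * (24 * Real.log y) := (div_le_iff₀ (by positivity)).1 hlarge
    _ = 24 * K * (Real.log y * y ^ (α - 1)) := by ring
    _ ≤ 24 * K * ((2 - 3 * α)⁻¹ * (y ^ (1 / 2 - α)) ^ 2) := by
      gcongr 24 * K * ?_
      exact log_mul_rpow_sub_one_le hα hy0
    _ = _ := by ring
  refine (Real.le_sqrt_of_sq_le hsq).trans_eq ?_
  rw [Real.sqrt_mul (by positivity), Real.sqrt_sq (by positivity)]

/- If `K * y ^ (α - 1)` is not small compared to `log t * (1 - 1 / r) / log y`, then `1 - 1 / r` is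
itself at most a power of `y`, and `1 - 1 / t` is at most `2 * (m + 1)` times that. -/
lemma mul_one_sub_mul_rpow_le (hK : 0 ≤ K) (hα : α < 2 / 3) (hy : Real.exp 1 ≤ y) (hr : 1 < r)
    (hrt : r ≤ t) :
    K * ((1 - 1 / t) * y ^ (α - 1)) ≤
      Real.log t / (2 * Real.log y + Real.log t) / 8 * (Real.log t * (1 - 1 / r)) +
        2 * K * √(24 * K * (2 - 3 * α)⁻¹) *
          ((⌈Real.log t / Real.log r⌉₊ + 1) * y ^ (-(1 / 2) : ℝ)) := by
  have ht : 1 < t := hr.trans_le hrt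
  have hy0 : 0 < y := (Real.exp_pos 1).trans_le hy
  have hY : 1 ≤ Real.log y := (Real.le_log_iff_exp_le hy0).2 hy
  have hρ : 0 ≤ 1 - 1 / r := one_sub_one_div_nonneg hr.le
  have hinv : 0 ≤ 1 - 1 / t := one_sub_one_div_nonneg ht.le
  have hlog : 0 < Real.log t := Real.log_pos ht
  rcases le_total (K * y ^ (α - 1)) (Real.log t * (1 - 1 / r) / (24 * Real.log y)) with
    hsmall | hlarge
  · refine le_add_of_le_of_nonneg ?_ (by positivity)
    calc
      K * ((1 - 1 / t) * y ^ (α - 1)) = (1 - 1 / t) * (K * y ^ (α - 1)) := by ring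
      _ ≤ (1 - 1 / t) * (Real.log t * (1 - 1 / r) / (24 * Real.log y)) := by gcongr
      _ = (1 - 1 / t) / (3 * Real.log y) / 8 * (Real.log t * (1 - 1 / r)) := by field_simp; ring
      _ ≤ _ := by gcongr ?_ / 8 * _; exact one_sub_one_div_div_le ht.le hY
  · refine le_add_of_nonneg_of_le (by positivity) ?_
    have hρ_le := one_sub_one_div_le_sqrt_mul_rpow hK hα hy hr hrt hlarge
    calc
      K * ((1 - 1 / t) * y ^ (α - 1))
        ≤ K * (2 * (√(24 * K * (2 - 3 * α)⁻¹) * y ^ (1 / 2 - α)) *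
            (⌈Real.log t / Real.log r⌉₊ + 1) * y ^ (α - 1)) := by
          gcongr
          exact (one_sub_one_div_le_mul_ceil hr (one_pos.trans ht)).trans (by gcongr)
      _ = 2 * K * √(24 * K * (2 - 3 * α)⁻¹) *
          ((⌈Real.log t / Real.log r⌉₊ + 1) * (y ^ (1 / 2 - α) * y ^ (α - 1))) := by ring
      _ = _ := by
        rw [← Real.rpow_add hy0]
        norm_num

lemma mul_rpow_le_mul_rpow_neg_half (hα : α ≤ 3 / 4) (hy : 1 ≤ y) (hyz : y ≤ z) :
    (y * z) ^ α ≤ y * z * y ^ (-(1 / 2) : ℝ) := by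
  have hy0 : 0 < y := one_pos.trans_le hy
  have hz0 : 0 < z := hy0.trans_le hyz
  calc
    (y * z) ^ α ≤ (y * z) ^ (1 + -(1 / 4) : ℝ) :=
      Real.rpow_le_rpow_of_exponent_le (one_le_mul_of_one_le_of_one_le hy (hy.trans hyz))
        (by linarith)
    _ = y * z * (y * z) ^ (-(1 / 4) : ℝ) := Real.rpow_one_add' (by positivity) (by norm_num)
    _ ≤ y * z * (y * y) ^ (-(1 / 4) : ℝ) :=
      mul_le_mul_of_nonneg_left (Real.rpow_le_rpow_of_nonpos (by positivity) (by gcongr)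
        (by norm_num)) (by positivity)
    _ = y * z * y ^ (-(1 / 2) : ℝ) := by
      rw [Real.mul_rpow hy0.le hy0.le, ← Real.rpow_add hy0]
      norm_num

/-- The error term of the prime pair count, up to a constant. For `y = x ^ c₁` and
`z = x ^ (1 - c₁)` it is the paper's `(m + 1) * c₁⁻¹ * x ^ (1 - c₁ / 2)`. -/
noncomputable def pairError (y z r : ℝ) : ℝ :=
  (⌈Real.log (z / y) / Real.log r⌉₊ + 1) * ((2 * Real.log y + Real.log (z / y)) / Real.log y) *
    (y * z * y ^ (-(1 / 2) : ℝ))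

lemma pairError_nonneg (hy : 1 ≤ y) (hyz : y ≤ z) : 0 ≤ pairError y z r := by
  have hy0 : 0 < y := one_pos.trans_le hy
  have hz0 : 0 < z := hy0.trans_le hyz
  have hY : 0 ≤ Real.log y := Real.log_nonneg hy
  have hL : 0 ≤ Real.log (z / y) := Real.log_nonneg ((one_le_div hy0).2 hyz)
  rw [pairError]
  positivity

lemma mul_le_log_sq_mul_pairError (hy : Real.exp 1 ≤ y) (hyz : y ≤ z) :
    (2 + Real.log (z / y)) *
      ((⌈Real.log (z / y) / Real.log r⌉₊ + 1) * (y * z * y ^ (-(1 / 2) : ℝ))) ≤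
        Real.log y ^ 2 * pairError y z r := by
  have hy0 : 0 < y := (Real.exp_pos 1).trans_le hy
  have hz0 : 0 < z := hy0.trans_le hyz
  have hY : 1 ≤ Real.log y := (Real.le_log_iff_exp_le hy0).2 hy
  have hL : 0 ≤ Real.log (z / y) := Real.log_nonneg ((one_le_div hy0).2 hyz)
  calc
    _ ≤ (2 * Real.log y + Real.log (z / y)) * Real.log y *
        ((⌈Real.log (z / y) / Real.log r⌉₊ + 1) * (y * z * y ^ (-(1 / 2) : ℝ))) := by
      gcongr
      nlinarith
    _ = Real.log y ^ 2 * pairError y z r := by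
      rw [pairError]
      field_simp

lemma mul_le_two_mul_pairError (hy : 1 < y) (hy' : y ≤ Real.exp 1) (hyz : y ≤ z) :
    y * z * (2 + Real.log (z / y)) ≤ 2 * pairError y z r := by
  have hy0 : 0 < y := one_pos.trans hy
  have hz0 : 0 < z := hy0.trans_le hyz
  have hY : 0 < Real.log y := Real.log_pos hy
  have hY1 : Real.log y ≤ 1 := (Real.log_le_iff_le_exp hy0).2 hy'
  have hL : 0 ≤ Real.log (z / y) := Real.log_nonneg ((one_le_div hy0).2 hyz)
  have hquot : 2 + Real.log (z / y) ≤ (2 * Real.log y + Real.log (z / y)) / Real.log y := by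
    rw [add_div, mul_div_cancel_right₀ _ hY.ne']
    gcongr
    exact le_div_self hL hY hY1
  have hhalf : 1 / 2 ≤ y ^ (-(1 / 2) : ℝ) := by
    rw [Real.rpow_neg hy0.le, ← Real.sqrt_eq_rpow, one_div]
    gcongr
    rw [Real.sqrt_le_left two_pos.le]
    linarith [Real.exp_one_lt_three]
  calc
    y * z * (2 + Real.log (z / y)) =
        2 * ((0 + 1) * (2 + Real.log (z / y)) * (y * z * (1 / 2))) := by ring
    _ ≤ 2 * pairError y z r := by
      rw [pairError]
      gcongr
      exact Nat.cast_nonneg _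

lemma mul_sub_mul_rpow_le (hK : 0 ≤ K) (hα : α < 2 / 3) (hy : Real.exp 1 ≤ y) (hr : 1 < r)
    (hryz : r * y ≤ z) :
    K * ((z - y) * y ^ α) ≤
      Real.log (z / y) / (2 * Real.log y + Real.log (z / y)) / 8 *
        (y * z * (Real.log (z / y) * (1 - 1 / r))) +
      2 * K * √(24 * K * (2 - 3 * α)⁻¹) *
        ((⌈Real.log (z / y) / Real.log r⌉₊ + 1) * (y * z * y ^ (-(1 / 2) : ℝ))) := by
  have hy0 : 0 < y := (Real.exp_pos 1).trans_le hy
  have hz0 : 0 < z := (mul_pos (one_pos.trans hr) hy0).trans_le hryz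
  have hnormalize : (z - y) * y ^ α = y * z * ((1 - 1 / (z / y)) * y ^ (α - 1)) := by
    rw [Real.rpow_sub_one hy0.ne']
    field_simp
  have hscaled := mul_le_mul_of_nonneg_left (mul_one_sub_mul_rpow_le hK hα hy hr
    ((le_div_iff₀ hy0).2 hryz)) (by positivity : 0 ≤ y * z)
  rw [hnormalize]
  linarith

lemma mul_rpow_mul_add_log_le (hα : α ≤ 3 / 4) (hy : 1 ≤ y) (hyz : y ≤ z) :
    (y * z) ^ α * (2 + α * Real.log (z / y)) ≤
      (2 + Real.log (z / y)) *
        ((⌈Real.log (z / y) / Real.log r⌉₊ + 1) * (y * z * y ^ (-(1 / 2) : ℝ))) := by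
  have hy0 : 0 < y := one_pos.trans_le hy
  have hz0 : 0 < z := hy0.trans_le hyz
  have hL : 0 ≤ Real.log (z / y) := Real.log_nonneg ((one_le_div hy0).2 hyz)
  calc
    _ ≤ (y * z) ^ α * (2 + 1 * Real.log (z / y)) := by gcongr; linarith
    _ = (2 + Real.log (z / y)) * ((0 + 1) * (y * z) ^ α) := by ring
    _ ≤ _ := by
      gcongr
      · exact Nat.cast_nonneg _
      · exact mul_rpow_le_mul_rpow_neg_half hα hy hyz

lemma exists_error_le (hK : 0 ≤ K) (hα : α < 2 / 3) :
    ∃ C, 0 ≤ C ∧ ∀ y z r : ℝ, Real.exp 1 ≤ y → 1 < r → r * y ≤ z →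
      2 * K * (2 * ((1 - α)⁻¹ * ((z - y) * y ^ α)) +
        K * ((y * z) ^ α * (2 + α * Real.log (z / y)))) ≤
      Real.log (z / y) / (2 * Real.log y + Real.log (z / y)) / 8 *
        (y * z * (Real.log (z / y) * (1 - 1 / r))) +
          Real.log y ^ 2 * (C * pairError y z r) := by
  have hα1 : 0 < 1 - α := by linarith
  set K' := 4 * K * (1 - α)⁻¹
  set D := 2 * K' * √(24 * K' * (2 - 3 * α)⁻¹)
  refine ⟨D + 2 * K ^ 2, by positivity, fun y z r hy hr hryz ↦ ?_⟩
  have hy1 : 1 ≤ y := (Real.one_le_exp one_pos.le).trans hy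
  have hy0 : 0 < y := one_pos.trans_le hy1
  have hyz : y ≤ z := (le_mul_of_one_le_left hy0.le hr.le).trans hryz
  have hL : 0 ≤ Real.log (z / y) := Real.log_nonneg ((one_le_div hy0).2 hyz)
  have hlinear := mul_sub_mul_rpow_le (by positivity : 0 ≤ K') hα hy hr hryz
  have hbilinear := mul_rpow_mul_add_log_le (r := r) (by linarith : α ≤ 3 / 4) hy1 hyz
  have hpair := mul_le_log_sq_mul_pairError (r := r) hy hyz
  set L := Real.log (z / y)
  set M : ℝ := (⌈L / Real.log r⌉₊ + 1) * (y * z * y ^ (-(1 / 2) : ℝ))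
  have hM : 0 ≤ M := by have := hy0.trans_le hyz; positivity
  calc
    _ = K' * ((z - y) * y ^ α) + 2 * K ^ 2 * ((y * z) ^ α * (2 + α * L)) := by ring
    _ ≤ L / (2 * Real.log y + L) / 8 * (y * z * (L * (1 - 1 / r))) + D * M +
        2 * K ^ 2 * ((2 + L) * M) := by gcongr
    _ ≤ L / (2 * Real.log y + L) / 8 * (y * z * (L * (1 - 1 / r))) + D * ((2 + L) * M) +
        2 * K ^ 2 * ((2 + L) * M) := by gcongr; exact le_mul_of_one_le_left hM (by linarith)
    _ = L / (2 * Real.log y + L) / 8 * (y * z * (L * (1 - 1 / r))) +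
        (D + 2 * K ^ 2) * ((2 + L) * M) := by ring
    _ ≤ L / (2 * Real.log y + L) / 8 * (y * z * (L * (1 - 1 / r))) +
        (D + 2 * K ^ 2) * (Real.log y ^ 2 * pairError y z r) := by gcongr
    _ = _ := by ring

/-- The number of prime pairs lies within `T` of the interval between the two extreme main terms,
in which every pair `(p, q)` is counted as if `log p * log q` were `log z ^ 2`, the largest
conceivable weight, or `log y ^ 2`, the smallest one. -/
structure PairCountWithin (y z r T : ℝ) : Prop where
  lower : y * z * bandFactor (Real.log (z / y)) r / Real.log z ^ 2 - T ≤ (primePairs y z r).card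
  upper : (primePairs y z r).card ≤ y * z * bandFactor (Real.log (z / y)) r / Real.log y ^ 2 + T

lemma PairCountWithin.mono {T' : ℝ} (h : PairCountWithin y z r T) (hT : T ≤ T') :
    PairCountWithin y z r T' :=
  ⟨by linarith [h.lower], by linarith [h.upper]⟩

lemma exists_pairCountWithin_of_exp_one_le
    (hθ : ∀ x : ℝ, 1 ≤ x → |Chebyshev.theta x - x| ≤ K * x ^ α) (hα0 : 0 ≤ α) (hα : α < 2 / 3) :
    ∃ C, ∀ y z r : ℝ, Real.exp 1 ≤ y → 1 < r → r * y ≤ z →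
      PairCountWithin y z r (C * pairError y z r) := by
  have hK : 0 ≤ K := zero_le_one.trans (one_le_of_abs_theta_sub_le hθ)
  obtain ⟨C, hC, hE⟩ := exists_error_le hK hα
  refine ⟨2 * C, fun y z r hy hr hryz ↦ ?_⟩
  have hy1 : 1 < y := (Real.one_lt_exp_iff.2 one_pos).trans_le hy
  have hy0 : 0 < y := one_pos.trans hy1
  have hyz : y ≤ z := (le_mul_of_one_le_left hy0.le hr.le).trans hryz
  have hT : 0 ≤ C * pairError y z r := mul_nonneg hC (pairError_nonneg hy1.le hyz)
  have hW {s : ℝ} (hs : 1 ≤ s) (hsr : s ≤ r) :=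
    abs_weightedPairCount_sub_le hθ hα0 (by linarith) hy1.le hs
      ((mul_le_mul_of_nonneg_right hsr hy0.le).trans hryz)
  rw [mul_assoc]
  refine ⟨?_, card_primePairs_le hy1 hr.le hryz ?_ (hE y z r hy hr hryz)⟩
  · linarith [le_card_primePairs hy1 hr.le hryz hT (hW hr.le le_rfl) (hE y z r hy hr hryz)]
  · rintro s (rfl | rfl)
    · exact hW hr.le le_rfl
    · exact hW (Real.one_le_sqrt.2 hr.le) (Real.sqrt_le_self_iff.2 (.inr hr.le))

lemma card_mul_log_two_sq_le (hy : 0 ≤ y) (hz : 0 ≤ z) :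
    (primePairs y z r).card * Real.log 2 ^ 2 ≤ weightedPairCount y z r := by
  have hlog {p : ℕ} (hp : p.Prime) : Real.log 2 ≤ Real.log p :=
    Real.log_le_log two_pos (mod_cast hp.two_le)
  rw [weightedPairCount, ← nsmul_eq_mul]
  refine Finset.card_nsmul_le_sum _ _ _ fun pq hpq ↦ ?_
  obtain ⟨⟨hp, -⟩, ⟨hq, -⟩, -⟩ := (mem_primePairs hy hz).1 hpq
  rw [sq]
  exact mul_le_mul (hlog hp) (hlog hq) (Real.log_nonneg one_le_two) (Real.log_natCast_nonneg _)

lemma weightedPairCount_le (hθ : ∀ x : ℝ, 1 ≤ x → |Chebyshev.theta x - x| ≤ K * x ^ α)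
    (hα0 : 0 ≤ α) (hα1 : α < 1) (hy : 1 ≤ y) (hr : 1 ≤ r) (hryz : r * y ≤ z) :
    weightedPairCount y z r ≤
      (1 + 4 * K * (1 - α)⁻¹ + 2 * K ^ 2) * (y * z * (2 + Real.log (z / y))) := by
  have hK : 0 ≤ K := zero_le_one.trans (one_le_of_abs_theta_sub_le hθ)
  have hy0 : 0 < y := one_pos.trans_le hy
  have hr0 : 0 < r := one_pos.trans_le hr
  have hyz : y ≤ z := (le_mul_of_one_le_left hy0.le hr).trans hryz
  have hz0 : 0 < z := hy0.trans_le hyz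
  have hL : 0 ≤ Real.log (z / y) := Real.log_nonneg ((one_le_div hy0).2 hyz)
  have hW := (abs_le.1 (abs_weightedPairCount_sub_le hθ hα0 hα1 hy hr hryz)).2
  set L := Real.log (z / y)
  have hbandFactor : bandFactor L r ≤ 2 + L := calc
    bandFactor L r ≤ L * (1 - 1 / r) := bandFactor_le hr0
    _ ≤ L * 1 := by gcongr; linarith [one_div_pos.2 hr0]
    _ ≤ 2 + L := by linarith
  have hlinear : (z - y) * y ^ α ≤ y * z * (2 + L) := calc
    (z - y) * y ^ α ≤ z * y ^ (1 : ℝ) := by gcongr; linarith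
    _ = y * z * 1 := by rw [Real.rpow_one]; ring
    _ ≤ y * z * (2 + L) := by gcongr; linarith
  have hbilinear : (y * z) ^ α * (2 + α * L) ≤ y * z * (2 + L) := by
    gcongr
    · exact Real.rpow_le_self_of_one_le (one_le_mul_of_one_le_of_one_le hy (hy.trans hyz)) hα1.le
    · exact mul_le_of_le_one_left hL hα1.le
  calc
    weightedPairCount y z r ≤ y * z * bandFactor L r + (4 * K * (1 - α)⁻¹ * ((z - y) * y ^ α) +
        2 * K ^ 2 * ((y * z) ^ α * (2 + α * L))) := by linarith
    _ ≤ y * z * (2 + L) + (4 * K * (1 - α)⁻¹ * (y * z * (2 + L)) +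
        2 * K ^ 2 * (y * z * (2 + L))) := by gcongr
    _ = _ := by ring

lemma bandFactor_le_sq (hr : 1 ≤ r) (hrL : Real.log r ≤ L) : bandFactor L r ≤ L ^ 2 := by
  have hr0 : 0 < r := one_pos.trans_le hr
  have hL : 0 ≤ L := (Real.log_nonneg hr).trans hrL
  rw [sq]
  exact (bandFactor_le hr0).trans (by gcongr; exact (one_sub_one_div_le_log hr0).trans hrL)

lemma exists_pairCountWithin_of_le_exp_one
    (hθ : ∀ x : ℝ, 1 ≤ x → |Chebyshev.theta x - x| ≤ K * x ^ α) (hα0 : 0 ≤ α) (hα1 : α < 1) :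
    ∃ C, ∀ y z r : ℝ, 1 < y → y ≤ Real.exp 1 → 1 ≤ r → r * y ≤ z →
      PairCountWithin y z r (C * pairError y z r) := by
  have hK : 0 ≤ K := zero_le_one.trans (one_le_of_abs_theta_sub_le hθ)
  set D := 1 + 4 * K * (1 - α)⁻¹ + 2 * K ^ 2
  refine ⟨max 2 (D * 2 / Real.log 2 ^ 2), fun y z r hy hy' hr hryz ↦ ?_⟩
  have hy0 : 0 < y := one_pos.trans hy
  have hr0 : 0 < r := one_pos.trans_le hr
  have hyz : y ≤ z := (le_mul_of_one_le_left hy0.le hr).trans hryz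
  have hz0 : 0 < z := hy0.trans_le hyz
  have hrL : Real.log r ≤ Real.log (z / y) := Real.log_le_log hr0 ((le_div_iff₀ hy0).2 hryz)
  have hL : 0 ≤ Real.log (z / y) := (Real.log_nonneg hr).trans hrL
  have hA : 0 ≤ bandFactor (Real.log (z / y)) r := bandFactor_nonneg hr hrL
  have hA_le := bandFactor_le_sq hr hrL
  have hT : 0 ≤ pairError y z r := pairError_nonneg hy.le hyz
  have hpair := mul_le_two_mul_pairError (r := r) hy hy' hyz
  constructor
  · have hmain : y * z * bandFactor (Real.log (z / y)) r / Real.log z ^ 2 ≤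
        max 2 (D * 2 / Real.log 2 ^ 2) * pairError y z r := calc
      _ ≤ y * z := div_le_of_le_mul₀ (by positivity) (by positivity) <| by
        gcongr
        exact hA_le.trans (by gcongr; exact div_le_self hz0.le hy.le)
      _ ≤ y * z * (2 + Real.log (z / y)) := le_mul_of_one_le_right (by positivity) (by linarith)
      _ ≤ 2 * pairError y z r := hpair
      _ ≤ _ := by gcongr; exact le_max_left _ _
    linarith [Nat.cast_nonneg (α := ℝ) (primePairs y z r).card]
  · refine le_add_of_nonneg_of_le (by positivity) ?_
    calc
      ((primePairs y z r).card : ℝ) ≤ D * (2 * pairError y z r) / Real.log 2 ^ 2 := by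
        rw [le_div_iff₀ (by positivity)]
        refine (card_mul_log_two_sq_le hy0.le hz0.le).trans
          ((weightedPairCount_le hθ hα0 hα1 hy.le hr hryz).trans ?_)
        gcongr
      _ = D * 2 / Real.log 2 ^ 2 * pairError y z r := by ring
      _ ≤ _ := by gcongr; exact le_max_right _ _

theorem exists_pairCountWithin
    (hθ : ∀ x : ℝ, 1 ≤ x → |Chebyshev.theta x - x| ≤ K * x ^ α) (hα0 : 0 ≤ α) (hα : α < 2 / 3) :
    ∃ C, 0 < C ∧ ∀ y z r : ℝ, 1 < y → 1 < r → r * y ≤ z →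
      PairCountWithin y z r (C * pairError y z r) := by
  obtain ⟨C₁, h₁⟩ := exists_pairCountWithin_of_exp_one_le hθ hα0 hα
  obtain ⟨C₂, h₂⟩ := exists_pairCountWithin_of_le_exp_one hθ hα0 (by linarith)
  refine ⟨max 1 (max C₁ C₂), by positivity, fun y z r hy hr hryz ↦ ?_⟩
  have hT : 0 ≤ pairError y z r := pairError_nonneg hy.le
    ((le_mul_of_one_le_left (one_pos.trans hy).le hr.le).trans hryz)
  rcases le_total (Real.exp 1) y with hey | hye
  · exact (h₁ y z r hey hr hryz).mono (by gcongr; simp)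
  · exact (h₂ y z r hy hye hr.le hryz).mono (by gcongr; simp)

end PairCount

section MaximalNotion

variable {r x c₁ : ℝ}

lemma exists_mem_Icc_abs_sub_mul_le {a b M N T : ℝ} (hab : a ≤ b) (hT : 0 ≤ T)
    (hlower : a * M - T ≤ N) (hupper : N ≤ b * M + T) : ∃ t ∈ Icc a b, |N - t * M| ≤ T := by
  rcases le_total N (a * M) with hNa | haN
  · exact ⟨a, left_mem_Icc.2 hab, abs_le.2 ⟨by linarith, by linarith⟩⟩
  rcases le_total (b * M) N with hbN | hNb
  · exact ⟨b, right_mem_Icc.2 hab, abs_le.2 ⟨by linarith, by linarith⟩⟩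
  have hN : N ∈ (fun t ↦ t * M) '' Icc a b :=
    intermediate_value_Icc hab (by fun_prop) ⟨haN, hNb⟩
  obtain ⟨t, ht, rfl⟩ := hN
  exact ⟨t, ht, by simpa using hT⟩

lemma rpow_mul_rpow_one_sub (hx : 0 < x) (c₁ : ℝ) : x ^ c₁ * x ^ (1 - c₁) = x := by
  rw [← Real.rpow_add hx, add_sub_cancel, Real.rpow_one]

lemma log_rpow_one_sub_div_rpow (hx : 0 < x) (c₁ : ℝ) :
    Real.log (x ^ (1 - c₁) / x ^ c₁) = (1 - 2 * c₁) * Real.log x := by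
  rw [← Real.rpow_sub hx, Real.log_rpow hx]
  ring

lemma log_le_mul_log (hx : 1 < x) (hc : c₁ ≤ 1 / 2 - Real.log r / (2 * Real.log x)) :
    Real.log r ≤ (1 - 2 * c₁) * Real.log x := by
  have hlogx : 0 < Real.log x := Real.log_pos hx
  have := (div_le_iff₀ (by positivity)).1 (le_sub_comm.1 hc)
  linarith

lemma mul_rpow_le_rpow_one_sub (hr : 0 < r) (hx : 1 < x)
    (hc : c₁ ≤ 1 / 2 - Real.log r / (2 * Real.log x)) : r * x ^ c₁ ≤ x ^ (1 - c₁) := by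
  have hx0 : 0 < x := one_pos.trans hx
  rw [← le_div_iff₀ (by positivity), ← Real.log_le_log_iff hr (by positivity),
    log_rpow_one_sub_div_rpow hx0]
  exact log_le_mul_log hx hc

lemma NMAX_eq_card_primePairs (hx : 0 < x) :
    NMAX r c₁ x = (primePairs (x ^ c₁) (x ^ (1 - c₁)) r).card := by
  rw [NMAX, ← Nat.card_eq_finsetCard]
  refine Nat.card_congr (Equiv.subtypeEquivRight fun pq ↦ ?_)
  rw [mem_primePairs (by positivity) (by positivity), rpow_mul_rpow_one_sub hx, mem_Ioc, mem_Ioc]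
  tauto

lemma pairError_rpow (hx : 1 < x) (hc : c₁ ≠ 0) :
    pairError (x ^ c₁) (x ^ (1 - c₁)) r =
      (⌈(1 - 2 * c₁) * Real.log x / Real.log r⌉₊ + 1) * c₁⁻¹ * x ^ (1 - c₁ / 2) := by
  have hx0 : 0 < x := one_pos.trans hx
  have hlogx : 0 < Real.log x := Real.log_pos hx
  have hquot : (2 * (c₁ * Real.log x) + (1 - 2 * c₁) * Real.log x) / (c₁ * Real.log x) = c₁⁻¹ := by
    field_simp
    ring
  have hpow : x * (x ^ c₁) ^ (-(1 / 2) : ℝ) = x ^ (1 - c₁ / 2) := by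
    nth_rw 1 [← Real.rpow_one x]
    rw [← Real.rpow_mul hx0.le, ← Real.rpow_add hx0]
    ring_nf
  rw [pairError, rpow_mul_rpow_one_sub hx0, log_rpow_one_sub_div_rpow hx0, Real.log_rpow hx0,
    hquot, hpow]

lemma exists_coeff_abs_NMAX_sub_le {T : ℝ} (hr : 1 < r) (hx : 1 < x) (hc₀ : 0 < c₁)
    (hc : c₁ ≤ 1 / 2 - Real.log r / (2 * Real.log x)) (hT : 0 ≤ T)
    (h : PairCountWithin (x ^ c₁) (x ^ (1 - c₁)) r T) :
    ∃ a ∈ Icc (1 / (4 * (1 - c₁) ^ 2)) (1 / (4 * c₁ ^ 2)),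
      |(NMAX r c₁ x : ℝ) -
        a * (4 * x / Real.log x ^ 2 * bandFactor ((1 - 2 * c₁) * Real.log x) r)| ≤ T := by
  have hx0 : 0 < x := one_pos.trans hx
  have hlogx : 0 < Real.log x := Real.log_pos hx
  have hhalf : c₁ < 1 / 2 := by
    have : 0 < Real.log r / (2 * Real.log x) := by have := Real.log_pos hr; positivity
    linarith
  have hmain (a A : ℝ) :
      x * A / (a * Real.log x) ^ 2 = 1 / (4 * a ^ 2) * (4 * x / Real.log x ^ 2 * A) := by
    field_simp
  obtain ⟨hlower, hupper⟩ := h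
  rw [← NMAX_eq_card_primePairs hx0, rpow_mul_rpow_one_sub hx0, log_rpow_one_sub_div_rpow hx0,
    Real.log_rpow hx0, hmain] at hlower hupper
  refine exists_mem_Icc_abs_sub_mul_le ?_ hT hlower hupper
  gcongr
  linarith

end MaximalNotion

theorem NMAX_asymptotics_band_general {Θ : ℝ} (hΘ : Θ < 2 / 3) (hζ : QuasiRiemannHypothesis Θ) :
    ∃ C : ℝ, 0 < C ∧ ∀ r x c₁ : ℝ, 1 < r → 1 < x → 0 < c₁ →
      c₁ ≤ 1 / 2 - Real.log r / (2 * Real.log x) →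
      ∃ atil ∈ Set.Icc (1 / (4 * (1 - c₁) ^ 2)) (1 / (4 * c₁ ^ 2)),
        |(NMAX r c₁ x : ℝ)
            - atil * (4 * x / (Real.log x) ^ 2)
              * ((1 - 2 * c₁) * (1 - 1 / r) * Real.log x - 1 + (Real.log r + 1) / r)|
          ≤ C * ((⌈(1 - 2 * c₁) * Real.log x / Real.log r⌉₊ : ℝ) + 1) * c₁⁻¹
              * x ^ (1 - c₁ / 2) := by
  obtain ⟨α, hΘα, hα⟩ : ∃ α, max Θ (1 / 2) < α ∧ α < 2 / 3 :=
    exists_between (max_lt hΘ (by norm_num))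
  obtain ⟨hΘα, hα0⟩ := max_lt_iff.1 hΘα
  obtain ⟨K, hθ⟩ := hζ.exists_abs_theta_sub_le hΘα hα0.le (by linarith)
  obtain ⟨C, hC, hcount⟩ := exists_pairCountWithin hθ (by linarith) hα
  refine ⟨C, hC, fun r x c₁ hr hx hc₀ hc ↦ ?_⟩
  have hy : 1 < x ^ c₁ := Real.one_lt_rpow hx hc₀
  have hwithin := hcount _ _ r hy hr (mul_rpow_le_rpow_one_sub (one_pos.trans hr) hx hc)
  rw [pairError_rpow hx hc₀.ne'] at hwithin
  obtain ⟨a, ha, habs⟩ := exists_coeff_abs_NMAX_sub_le hr hx hc₀ hc (by positivity) hwithin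
  refine ⟨a, ha, le_of_eq_of_le ?_ (habs.trans_eq ?_)⟩
  · rw [bandFactor, mul_right_comm (1 - 2 * c₁), mul_assoc a]
  · ring

/-- Theorem 5.2(i) of the paper (count of the maximal notion, band case, under RH). -/
theorem NMAX_asymptotics_band (hRH : RiemannHypothesis) :
    ∃ C : ℝ, 0 < C ∧ ∀ r x c₁ : ℝ, 1 < r → 1 < x → 0 < c₁ →
      (2657 : ℝ) ≤ x ^ c₁ → c₁ ≤ 1 / 2 - Real.log r / (2 * Real.log x) →
      ∃ atil ∈ Set.Icc (1 / (4 * (1 - c₁) ^ 2)) (1 / (4 * c₁ ^ 2)),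
        |(NMAX r c₁ x : ℝ)
            - atil * (4 * x / (Real.log x) ^ 2)
              * ((1 - 2 * c₁) * (1 - 1 / r) * Real.log x - 1 + (Real.log r + 1) / r)|
          ≤ C * ((⌈(1 - 2 * c₁) * Real.log x / Real.log r⌉₊ : ℝ) + 1) * c₁⁻¹
              * x ^ (1 - c₁ / 2) := by
  obtain ⟨C, hC, h⟩ := NMAX_asymptotics_band_general (by norm_num)
    (quasiRiemannHypothesis_of_riemannHypothesis hRH)
  exact ⟨C, hC, fun r x c₁ hr hx hc₀ _ hc ↦ h r x c₁ hr hx hc₀ hc⟩
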